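/- arXiv:math/0111256 — 6 statements merged into one kernel-verified Lean document; each statement's English description precedes it below -/
import Mathlib

section
/- Let n ≥ 1 and let M be a ℂ[z]-submodule of ℂ[z]^{⊕n}. If σ_t(M) = M for every t ∈ ℂ with |t| = 1, then σ_t(M) = M for every t ∈ ℂ with t ≠ 0. (Affine-chart form of Lemma 2.1.3: an S¹-invariant coherent subsheaf of the trivial bundle is automatically ℂ^×-invariant.) -/
/-!
For fixed `f`, the vector `σ_t f` depends polynomially on `t`, with degree less than some `N`.
Lagrange interpolation at the `N`-th roots of unity therefore writes `σ_t f`, for every `t ∈ ℂ`, as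
a `ℂ`-linear combination of the vectors `σ_v f` with `v` on the unit circle
(`exists_substVec_eq_sum`). Hence an `S¹`-invariant submodule is stable under every `σ_t`, and
for `t ≠ 0` stability under `σ_{t⁻¹}` gives the reverse inclusion.
-/

open Polynomial

/-- Coordinatewise substitution `z ↦ t·z` on `ℂ[z]^{⊕n}`:
`(σ_t f)(z) = f (t z)` componentwise. -/
noncomputable def substVec (n : ℕ) (t : ℂ) (f : Fin n → Polynomial ℂ) : Fin n → Polynomial ℂ :=
  fun i => (f i).comp (Polynomial.C t * Polynomial.X)

/-- `σ_t f` is a linear combination of finitely many `σ_v f` with `|v| = 1`. -/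
lemma exists_substVec_eq_sum (n : ℕ) (f : Fin n → ℂ[X]) (t : ℂ) :
    ∃ (s : Finset ℂ) (c : ℂ → ℂ), (∀ v ∈ s, ‖v‖ = 1) ∧
      substVec n t f = ∑ v ∈ s, (C (c v) : ℂ[X]) • substVec n v f := by
  classical
  obtain ⟨N, hN0, hN⟩ : ∃ N : ℕ, N ≠ 0 ∧ ∀ i, (f i).natDegree < N :=
    ⟨Finset.univ.sup (fun i => (f i).natDegree) + 1, Nat.succ_ne_zero _, fun i =>
      Nat.lt_succ_of_le (Finset.le_sup (f := fun i => (f i).natDegree) (Finset.mem_univ i))⟩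
  have hcard : (nthRootsFinset N (1 : ℂ)).card = N :=
    (Complex.isPrimitiveRoot_exp N hN0).card_nthRootsFinset
  refine ⟨nthRootsFinset N (1 : ℂ),
    fun v => (Lagrange.basis (nthRootsFinset N (1 : ℂ)) id v).eval t, fun v hv => ?_, ?_⟩
  · exact Complex.norm_eq_one_of_pow_eq_one
      ((mem_nthRootsFinset (Nat.pos_of_ne_zero hN0) _).1 hv) hN0
  · ext i k
    simp only [substVec, Finset.sum_apply, Pi.smul_apply, smul_eq_mul, finsetSum_coeff,
      coeff_C_mul, comp_C_mul_X_coeff]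
    rcases lt_or_ge k N with hk | hk
    · -- Interpolate the monomial `X ^ k` and evaluate at `t`.
      have h := Lagrange.eq_interpolate (s := nthRootsFinset N (1 : ℂ)) (v := id) (f := X ^ k)
        (Function.injective_id.injOn) (by rw [degree_X_pow, hcard]; exact_mod_cast hk)
      have h' := congrArg (eval t) h
      simp only [Lagrange.interpolate_apply, eval_finsetSum, eval_mul, eval_C, eval_pow,
        eval_X, id] at h'
      rw [h', Finset.mul_sum]
      exact Finset.sum_congr rfl fun v _ => by ring
    · simp [coeff_eq_zero_of_natDegree_lt ((hN i).trans_le hk)]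

lemma substVec_substVec_inv (n : ℕ) {t : ℂ} (ht : t ≠ 0) (f : Fin n → ℂ[X]) :
    substVec n t (substVec n t⁻¹ f) = f := by
  ext i k
  simp [substVec, comp_C_mul_X_coeff, ht]

/-- affine-chart form of Lemma 2.1.3: if a `ℂ[z]`-submodule
`M ⊆ ℂ[z]^{⊕n}` satisfies `σ_t(M) = M` for every `t` on the unit circle, then
`σ_t(M) = M` for every `t ≠ 0`. -/
theorem s1_invariant_submodule_is_Cstar_invariant
    (n : ℕ) (hn : 1 ≤ n) (M : Submodule (Polynomial ℂ) (Fin n → Polynomial ℂ))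
    (hS1 : ∀ t : ℂ, ‖t‖ = 1 → substVec n t '' (M : Set (Fin n → Polynomial ℂ)) = M) :
    ∀ t : ℂ, t ≠ 0 → substVec n t '' (M : Set (Fin n → Polynomial ℂ)) = M := by
  have key : ∀ (t : ℂ), ∀ f ∈ M, substVec n t f ∈ M := by
    intro t f hf
    obtain ⟨s, c, hs, h⟩ := exists_substVec_eq_sum n f t
    rw [h]
    refine M.sum_mem fun v hv => M.smul_mem _ ?_
    have hv' : substVec n v f ∈ (M : Set (Fin n → Polynomial ℂ)) :=
      hS1 v (hs v hv) ▸ Set.mem_image_of_mem _ hf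
    exact hv'
  intro t ht
  refine Set.Subset.antisymm ?_ fun f hf => ?_
  · rintro _ ⟨f, hf, rfl⟩
    exact key t f hf
  · exact ⟨substVec n t⁻¹ f, key _ f hf, substVec_substVec_inv n ht f⟩
end

section
/- Let A = A(z) be an l×l matrix with entries in ℂ[z] and with det A(z) ≠ 0 (as a polynomial). Suppose that for every t ∈ ℂ^× the ℂ[z]-submodule of ℂ[z]^{⊕l} generated by the columns of the matrix A(tz) (obtained by substituting z ↦ tz in every entry) is equal to the ℂ[z]-submodule generated by the columns of A(z). Then there exist an invertible constant matrix P ∈ GL(l, ℂ), a matrix Q(z) ∈ GL(l, ℂ[z]) (i.e. a matrix over ℂ[z] whose determinant is a nonzero constant), and integers 0 ≤ α₁ ≤ α₂ ≤ ⋯ ≤ α_l, such that A(z) = P · Diag(z^{α₁}, …, z^{α_l}) · Q(z). (Lemma 2.1.4.) -/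
/-!
Let `M` be the column span of `A`. Invariance under `z ↦ tz` for all `t ≠ 0` makes `M` a graded
submodule: since `v(tz) = ∑ tᵏ zᵏ vₖ` lies in `M` for all `t ≠ 0`, inverting a Vandermonde matrix
shows that every homogeneous component `zᵏ vₖ` lies in `M` (`homogeneous_mem`).

Consider pairs `(P, α)` with `P` an invertible constant matrix whose columns `pⱼ` satisfy
`z^{αⱼ} pⱼ ∈ M`. Such pairs exist because `det A · eⱼ ∈ M`. Choose one with `∑ αⱼ` minimal. If
`zᵏ v ∈ M` and `v = ∑ cⱼ pⱼ`, then `cⱼ ≠ 0` forces `αⱼ ≤ k`, as otherwise exchanging `pⱼ` for `v`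
would lower the sum. Hence `zᵏ v` lies in the span of the `z^{αⱼ} pⱼ`, and by gradedness these
vectors generate `M` (`exists_adapted`). So `A` and `P · Diag(z^{αⱼ})` have the same column span,
which means that they differ by an invertible right factor; sorting `α` finishes the proof.
-/

open Polynomial

/-- The `ℂ[z]`-submodule of `ℂ[z]^{⊕l}` generated by the columns of a matrix `A`. -/
noncomputable def colSpan (l : ℕ) (A : Matrix (Fin l) (Fin l) (Polynomial ℂ)) :
    Submodule (Polynomial ℂ) (Fin l → Polynomial ℂ) :=
  Submodule.span (Polynomial ℂ) (Set.range fun j : Fin l => fun i : Fin l => A i j)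

/-- The matrix `A(tz)`: the substitution `z ↦ t·z` applied to every entry. -/
noncomputable def substMat (l : ℕ) (t : ℂ) (A : Matrix (Fin l) (Fin l) (Polynomial ℂ)) :
    Matrix (Fin l) (Fin l) (Polynomial ℂ) :=
  A.map fun p => p.comp (Polynomial.C t * Polynomial.X)

theorem mem_colSpan_iff {l : ℕ} (A : Matrix (Fin l) (Fin l) ℂ[X]) (v : Fin l → ℂ[X]) :
    v ∈ colSpan l A ↔ ∃ c, A.mulVec c = v := by
  have h : colSpan l A = LinearMap.range A.mulVecLin := by
    rw [Matrix.range_mulVecLin]; rfl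
  rw [h]; rfl

theorem col_mem_colSpan {l : ℕ} (A : Matrix (Fin l) (Fin l) ℂ[X]) (j : Fin l) :
    (fun i => A i j) ∈ colSpan l A :=
  Submodule.subset_span ⟨j, rfl⟩

theorem exists_mul_of_colSpan_le {l : ℕ} {A B : Matrix (Fin l) (Fin l) ℂ[X]}
    (h : colSpan l A ≤ colSpan l B) : ∃ Q, A = B * Q := by
  choose c hc using fun j => (mem_colSpan_iff B _).1 (h (col_mem_colSpan A j))
  refine ⟨Matrix.of fun i j => c j i, ?_⟩
  refine Matrix.ext fun i j => ?_
  exact (congrFun (hc j) i).symm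

/-- If `∑ₖ tᵏ wₖ` lies in a subspace for all `t ≠ 0`, then so does each `wₖ`, by inverting the
Vandermonde matrix of the nodes `1, …, n`. -/
theorem mem_of_forall_sum_pow_smul_mem {E : Type*} [AddCommGroup E] [Module ℂ E]
    (N : Submodule ℂ E) (n : ℕ) (w : Fin n → E)
    (h : ∀ t : ℂ, t ≠ 0 → ∑ k : Fin n, t ^ (k : ℕ) • w k ∈ N) (k : Fin n) : w k ∈ N := by
  set x : Fin n → ℂ := fun j => (j : ℂ) + 1 with hx
  have hxinj : Function.Injective x := by
    intro a b hab
    simp only [hx, add_left_inj, Nat.cast_inj] at hab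
    exact Fin.ext hab
  set V := Matrix.vandermonde x with hV
  have hdet : IsUnit V.det := (Matrix.det_vandermonde_ne_zero_iff.2 hxinj).isUnit
  have hinv : V⁻¹ * V = 1 := Matrix.nonsing_inv_mul V hdet
  have key : w k = ∑ j, V⁻¹ k j • ∑ m : Fin n, x j ^ (m : ℕ) • w m := by
    simp only [Finset.smul_sum, smul_smul]
    rw [Finset.sum_comm]
    simp only [← Finset.sum_smul]
    have : ∀ m : Fin n, ∑ j, V⁻¹ k j * x j ^ (m : ℕ) = (1 : Matrix (Fin n) (Fin n) ℂ) k m := by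
      intro m
      rw [← hinv]; rfl
    simp [this, Matrix.one_apply]
  rw [key]
  refine N.sum_mem fun j _ => N.smul_mem _ (h _ ?_)
  exact Nat.cast_add_one_ne_zero _

/-- A column span invariant under `z ↦ tz` for all `t ≠ 0` is a graded submodule. -/
theorem homogeneous_mem {l : ℕ} {A : Matrix (Fin l) (Fin l) ℂ[X]}
    (hinv : ∀ t : ℂ, t ≠ 0 → colSpan l (substMat l t A) = colSpan l A)
    {v : Fin l → ℂ[X]} (hv : v ∈ colSpan l A) (k : ℕ) :
    (fun i => monomial k ((v i).coeff k)) ∈ colSpan l A := by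
  obtain ⟨n, hkn, hn⟩ : ∃ n, k < n ∧ ∀ i, (v i).natDegree < n := by
    refine ⟨k + ∑ i, (v i).natDegree + 1, by omega, fun i => ?_⟩
    have := Finset.single_le_sum (f := fun i => (v i).natDegree) (fun _ _ => Nat.zero_le _)
      (Finset.mem_univ i)
    omega
  refine mem_of_forall_sum_pow_smul_mem ((colSpan l A).restrictScalars ℂ) n
    (fun k i => monomial (k : ℕ) ((v i).coeff k)) (fun t ht => ?_) ⟨k, hkn⟩
  rw [Submodule.restrictScalars_mem, ← hinv t ht]
  obtain ⟨c, rfl⟩ := (mem_colSpan_iff A v).1 hv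
  refine (mem_colSpan_iff _ _).2 ⟨fun i => (c i).comp (C t * X), ?_⟩
  funext i
  have h1 : (substMat l t A).mulVec (fun i => (c i).comp (C t * X)) i
      = ((A.mulVec c) i).comp (C t * X) := by
    simp [substMat, Matrix.mulVec, dotProduct, Polynomial.sum_comp]
  rw [h1]
  simp only [Finset.sum_apply, Pi.smul_apply]
  conv_lhs => rw [(A.mulVec c i).as_sum_range' n (hn i)]
  rw [Polynomial.sum_comp, Finset.sum_range]
  refine Finset.sum_congr rfl fun m _ => ?_
  rw [monomial_comp, mul_pow, ← C_pow, ← C_mul_X_pow_eq_monomial, smul_eq_C_mul]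
  ring

theorem mul_diagonal_col {l : ℕ} (P : Matrix (Fin l) (Fin l) ℂ) (α : Fin l → ℕ) (j : Fin l) :
    (fun i => (P.map C * Matrix.diagonal (fun i => (X : ℂ[X]) ^ α i)) i j)
      = fun i => monomial (α j) (P i j) := by
  funext i
  simp [Matrix.mul_diagonal, C_mul_X_pow_eq_monomial]

/-- Existence of a constant basis adapted to the grading of the column span. -/
theorem exists_adapted {l : ℕ} {A : Matrix (Fin l) (Fin l) ℂ[X]} (hdet : A.det ≠ 0)
    (hinv : ∀ t : ℂ, t ≠ 0 → colSpan l (substMat l t A) = colSpan l A) :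
    ∃ (P : Matrix (Fin l) (Fin l) ℂ) (α : Fin l → ℕ), P.det ≠ 0 ∧
      colSpan l (P.map C * Matrix.diagonal (fun i => (X : ℂ[X]) ^ α i)) = colSpan l A := by
  classical
  let S : Set (Matrix (Fin l) (Fin l) ℂ × (Fin l → ℕ)) :=
    {x | x.1.det ≠ 0 ∧ ∀ j, (fun i => monomial (x.2 j) (x.1 i j)) ∈ colSpan l A}
  have hS : S.Nonempty := by
    refine ⟨(A.det.leadingCoeff • 1, fun _ => A.det.natDegree), ?_, fun j => ?_⟩
    · simp [hdet]
    · have h : (A.det • Pi.single j (1 : ℂ[X]) : Fin l → ℂ[X]) ∈ colSpan l A := by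
        refine (mem_colSpan_iff _ _).2 ⟨A.adjugate.mulVec (Pi.single j 1), ?_⟩
        rw [Matrix.mulVec_mulVec, Matrix.mul_adjugate, Matrix.smul_mulVec, Matrix.one_mulVec]
      convert homogeneous_mem hinv h A.det.natDegree using 2 with i
      by_cases hij : i = j
      · subst hij; simp
      · simp [hij]
  obtain ⟨⟨P, α⟩, ⟨hP, hmem⟩, hmin⟩ :=
    WellFounded.has_min (measure fun x : Matrix (Fin l) (Fin l) ℂ × (Fin l → ℕ) =>
      ∑ j, x.2 j).wf S hS
  refine ⟨P, α, hP, le_antisymm ?_ ?_⟩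
  · refine Submodule.span_le.2 ?_
    rintro _ ⟨j, rfl⟩
    simp only [mul_diagonal_col]
    exact hmem j
  -- A homogeneous element of the column span involves only the `pⱼ` with `αⱼ ≤ k`.
  have exch : ∀ (k : ℕ) (c : Fin l → ℂ),
      (fun i => monomial k (P.mulVec c i)) ∈ colSpan l A → ∀ j, c j ≠ 0 → α j ≤ k := by
    intro k c hc j hj
    by_contra! hlt
    refine hmin (P.updateCol j (P.mulVec c), Function.update α j k) ⟨?_, fun m => ?_⟩ ?_
    · have h := congrFun (Matrix.cramer_eq_adjugate_mulVec P (P.mulVec c)) j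
      rw [Matrix.mulVec_mulVec, Matrix.adjugate_mul, Matrix.smul_mulVec, Matrix.one_mulVec,
        Matrix.cramer_apply] at h
      simp only [h, Pi.smul_apply, smul_eq_mul]
      exact mul_ne_zero hP hj
    · by_cases hm : m = j
      · subst hm; simpa using hc
      · simpa [hm, Matrix.updateCol_apply] using hmem m
    · change ∑ m, Function.update α j k m < ∑ m, α m
      refine Finset.sum_lt_sum (fun m _ => ?_) ⟨j, Finset.mem_univ j, by simpa using hlt⟩
      by_cases hm : m = j
      · subst hm; simpa using hlt.le
      · simp [hm]
  set N := colSpan l (P.map C * Matrix.diagonal (fun i => (X : ℂ[X]) ^ α i)) with hN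
  have hgen : ∀ j, (fun i => monomial (α j) (P i j)) ∈ N := fun j => by
    rw [← mul_diagonal_col]; exact col_mem_colSpan _ j
  intro v hv
  have hsum : v = ∑ k ∈ Finset.range (∑ i, (v i).natDegree + 1),
      fun i => monomial k ((v i).coeff k) := by
    funext i
    rw [Finset.sum_apply]
    refine (v i).as_sum_range' _ (Nat.lt_succ_of_le ?_)
    exact Finset.single_le_sum (f := fun i => (v i).natDegree) (fun _ _ => Nat.zero_le _)
      (Finset.mem_univ i)
  rw [hsum]
  refine N.sum_mem fun k _ => ?_
  have hk := homogeneous_mem hinv hv k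
  obtain ⟨c, hc⟩ : ∃ c, P.mulVec c = fun i => (v i).coeff k :=
    ⟨P⁻¹.mulVec fun i => (v i).coeff k, by
      rw [Matrix.mulVec_mulVec, Matrix.mul_nonsing_inv _ hP.isUnit, Matrix.one_mulVec]⟩
  have hci : ∀ i, (v i).coeff k = P.mulVec c i := fun i => (congrFun hc i).symm
  simp only [hci] at hk ⊢
  have hexp : (fun i => monomial k (P.mulVec c i))
      = ∑ j, (monomial (k - α j) (c j) : ℂ[X]) • fun i => (monomial (α j) (P i j) : ℂ[X]) := by
    funext i
    simp only [Matrix.mulVec, dotProduct, map_sum, Finset.sum_apply, Pi.smul_apply, smul_eq_mul,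
      monomial_mul_monomial]
    refine Finset.sum_congr rfl fun j _ => ?_
    by_cases hj : c j = 0
    · simp [hj]
    · rw [Nat.sub_add_cancel (exch k c hk j hj), mul_comm]
  rw [hexp]
  exact N.sum_mem fun j _ => N.smul_mem _ (hgen j)

/-- Lemma 2.1.4: if `A(z)` is an `l×l` matrix over `ℂ[z]` with
`det A ≠ 0` and for each `t ∈ ℂ^×` the columns of `A(tz)` generate the same
`ℂ[z]`-submodule as the columns of `A(z)`, then
`A(z) = P · Diag(z^{α₁}, …, z^{α_l}) · Q(z)` with `P ∈ GL(l, ℂ)`,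
`Q ∈ GL(l, ℂ[z])` and `0 ≤ α₁ ≤ ⋯ ≤ α_l`. -/
theorem invariant_colspan_diagonalization
    (l : ℕ) (A : Matrix (Fin l) (Fin l) (Polynomial ℂ)) (hdet : A.det ≠ 0)
    (hinv : ∀ t : ℂ, t ≠ 0 → colSpan l (substMat l t A) = colSpan l A) :
    ∃ (P : Matrix (Fin l) (Fin l) ℂ) (Q : Matrix (Fin l) (Fin l) (Polynomial ℂ))
      (α : Fin l → ℕ),
      IsUnit P ∧ IsUnit Q ∧ Monotone α ∧
      A = (P.map Polynomial.C) * Matrix.diagonal (fun i => Polynomial.X ^ α i) * Q := by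
  obtain ⟨P, α, hP, hspan⟩ := exists_adapted hdet hinv
  set σ := Tuple.sort α
  set P' := P.submatrix id σ with hP'
  set B := P'.map C * Matrix.diagonal (fun i => (X : ℂ[X]) ^ (α ∘ σ) i) with hB
  -- Permuting the generators does not change their span.
  have hspan' : colSpan l B = colSpan l A := by
    rw [← hspan]
    have h : (fun j : Fin l => fun i : Fin l => B i j)
        = (fun j i => (P.map C * Matrix.diagonal (fun i => (X : ℂ[X]) ^ α i)) i j) ∘ σ := by
      funext j
      rw [hB, mul_diagonal_col]
      simp only [Function.comp_apply, mul_diagonal_col]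
      rfl
    unfold colSpan
    rw [h, σ.surjective.range_comp]
  obtain ⟨Q, hQ⟩ := exists_mul_of_colSpan_le hspan'.ge
  obtain ⟨R, hR⟩ := exists_mul_of_colSpan_le hspan'.le
  have hQR : A.det * (R.det * Q.det) = A.det * 1 := by
    rw [← mul_assoc, ← Matrix.det_mul, ← hR, ← Matrix.det_mul, ← hQ, mul_one]
  refine ⟨P', Q, α ∘ σ, ?_, ?_, Tuple.monotone_sort α, hQ⟩
  · rw [Matrix.isUnit_iff_isUnit_det, hP', Matrix.det_permute']
    refine IsUnit.mul ?_ hP.isUnit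
    exact ((Equiv.Perm.sign σ).isUnit).map (Int.castRingHom ℂ)
  · rw [Matrix.isUnit_iff_isUnit_det]
    exact IsUnit.of_mul_eq_one_right _ (mul_left_cancel₀ hdet hQR)
end

section
/- Let n ≥ 1 and let M be a nonzero ℂ^×-invariant ℂ[z]-submodule of ℂ[z]^{⊕n}. Then M is a free ℂ[z]-module of some rank r ≤ n, and there exist ℂ-linearly independent vectors u₁, …, u_r ∈ ℂⁿ and integers 0 ≤ α₁ ≤ ⋯ ≤ α_r such that M = ⊕_{i=1}^r ℂ[z]·(z^{α_i} u_i), where each u_i is regarded as the constant vector in ℂ[z]^{⊕n}. Moreover, the submodule M̂ := ℂ[z]·u₁ + ⋯ + ℂ[z]·u_r is the unique ℂ[z]-submodule of ℂ[z]^{⊕n} of the form ℂ[z] ⊗_ℂ W, for an r-dimensional ℂ-subspace W ⊆ ℂⁿ of constant vectors, which contains M; and the quotient M̂/M is isomorphic as a ℂ[z]-module to ⊕_{i=1}^r ℂ[z]/(z^{α_i}). (Affine-chart form of Proposition 2.1.5.) -/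
/-!
Invariance under `z ↦ tz` for enough values of `t` lets a Vandermonde system isolate each
homogeneous component, so `M` is graded: `f ∈ M` implies `z^k f_k ∈ M`
(`monomial_component_mem`). Hence `M` is determined by the increasing chain of subspaces
`W_k = {v ∈ ℂⁿ | z^k v ∈ M}` (`degreePiece`). An increasing chain in a finite-dimensional space has
an adapted basis (`exists_adapted_basis`): independent `u_i` with levels `α_i` such that
`W_k` is spanned by the `u_i` with `α_i ≤ k`. The vectors `z^{α_i} u_i` then generate `M`.

Independence over `ℂ[z]`, and the fact that `ℂ[z] ⊗ W` consists of the vectors whose coefficient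
vectors lie in `W`, are read off coefficientwise; the latter forces any `W` with
`M ⊆ ℂ[z] ⊗ W` to contain all `u_i`, hence to equal their span when `dim W = r`. In the basis `u_i`
of `M̂`, membership in `M` means that the `i`-th coordinate is divisible by `z^{α_i}`, which gives
the quotient.
-/

open Polynomial

/-- The submodule `ℂ[z] ⊗_ℂ W` of `ℂ[z]^{⊕n}`: the `ℂ[z]`-submodule generated by
the constant vectors lying in the `ℂ`-subspace `W ⊆ ℂⁿ`. -/
noncomputable def constSpan (n : ℕ) (W : Submodule ℂ (Fin n → ℂ)) :
    Submodule (Polynomial ℂ) (Fin n → Polynomial ℂ) :=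
  Submodule.span (Polynomial ℂ)
    ((fun (v : Fin n → ℂ) (j : Fin n) => Polynomial.C (v j)) '' (W : Set (Fin n → ℂ)))

/-- An increasing chain of subspaces of a finite-dimensional space has an adapted basis, ordered by
the level at which its members enter the chain. -/
lemma exists_adapted_basis {V : Type*} [AddCommGroup V] [Module ℂ V] [FiniteDimensional ℂ V]
    (W : ℕ → Submodule ℂ V) (hW : Monotone W) :
    ∃ (r : ℕ) (u : Fin r → V) (α : Fin r → ℕ), LinearIndependent ℂ u ∧ Monotone α ∧
      ∀ k, W k = Submodule.span ℂ (u '' {i | α i ≤ k}) := by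
  classical
  -- Nested bases `B k` of the `W k`, each extending the previous one.
  let P : ℕ → Set V → Prop := fun k s =>
    LinearIndepOn ℂ id s ∧ Submodule.span ℂ s = W k
  have h0 : ∃ s, P 0 s := by
    obtain ⟨b, hb, -, hs, hl⟩ := exists_linearIndepOn_id_extension
      (K := ℂ) (s := (∅ : Set V)) (t := (W 0 : Set V)) (linearIndepOn_empty ℂ id)
      (Set.empty_subset _)
    exact ⟨b, hl, le_antisymm (Submodule.span_le.2 hb) hs⟩
  have hstep : ∀ k s, P k s → ∃ t, s ⊆ t ∧ P (k + 1) t := by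
    rintro k s ⟨hl, hs⟩
    obtain ⟨b, hb, hsb, hs', hl'⟩ := exists_linearIndepOn_id_extension
      (K := ℂ) (s := s) (t := (W (k + 1) : Set V)) hl
      (fun x hx => hW (Nat.le_succ k) (hs ▸ Submodule.subset_span hx))
    exact ⟨b, hsb, hl', le_antisymm (Submodule.span_le.2 hb) hs'⟩
  choose s0 hs0 using h0
  choose! g hg1 hg2 using hstep
  let B : ℕ → Set V := fun k => Nat.rec s0 (fun k s => g k s) k
  have hB : ∀ k, P k (B k) := by
    intro k
    induction k with
    | zero => exact hs0
    | succ k ih => exact hg2 k _ ih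
  have hmono : Monotone B := monotone_nat_of_le_succ fun k => hg1 k _ (hB k)
  have hli : LinearIndepOn ℂ id (⋃ k, B k) :=
    linearIndepOn_iUnion_of_directed hmono.directed_le fun k => (hB k).1
  have hfin : (⋃ k, B k).Finite := LinearIndependent.setFinite hli
  let S : Set V := ⋃ k, B k
  have : Fintype S := hfin.fintype
  have hex : ∀ b : S, ∃ k, (b : V) ∈ B k := fun b => Set.mem_iUnion.1 b.2
  -- The level of a basis vector is the first index at which it appears.
  have hlevel : ∀ b : S, ∃ m, ∀ k, m ≤ k ↔ (b : V) ∈ B k := fun b =>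
    ⟨sInf {k | (b : V) ∈ B k}, fun k =>
      ⟨fun h => hmono h (Nat.sInf_mem (s := {k | (b : V) ∈ B k}) (hex b)), fun h => Nat.sInf_le h⟩⟩
  choose a ha using hlevel
  let e : Fin (Fintype.card S) ≃ S := (Fintype.equivFin S).symm
  let e' : Fin (Fintype.card S) ≃ S := (Tuple.sort (a ∘ e)).trans e
  refine ⟨Fintype.card S, fun i => (e' i : V), fun i => a (e' i), ?_, ?_, ?_⟩
  · exact LinearIndependent.comp (v := fun b : S => (b : V)) hli e' e'.injective
  · exact Tuple.monotone_sort (a ∘ e)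
  · intro k
    rw [← (hB k).2]
    congr 1
    ext x
    constructor
    · intro hx
      refine ⟨e'.symm ⟨x, Set.mem_iUnion.2 ⟨k, hx⟩⟩, ?_, by simp⟩
      simp [ha, hx]
    · rintro ⟨i, hi, rfl⟩
      exact (ha _ _).1 hi

/-- The subspace `{v ∈ ℂⁿ | z^k v ∈ M}` of `ℂⁿ`. -/
noncomputable def degreePiece {n : ℕ} (M : Submodule ℂ[X] (Fin n → ℂ[X])) (k : ℕ) :
    Submodule ℂ (Fin n → ℂ) where
  carrier := {v | (fun j => (X : ℂ[X]) ^ k * C (v j)) ∈ M}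
  zero_mem' := by
    have : (fun j => (X : ℂ[X]) ^ k * C ((0 : Fin n → ℂ) j)) = 0 := by ext1 j; simp
    simp only [Set.mem_ofPred_eq, this, zero_mem]
  add_mem' := by
    intro v w hv hw
    have : (fun j => (X : ℂ[X]) ^ k * C ((v + w) j)) =
        (fun j => (X : ℂ[X]) ^ k * C (v j)) + (fun j => (X : ℂ[X]) ^ k * C (w j)) := by
      ext1 j; simp [mul_add]
    simp only [Set.mem_ofPred_eq, this]
    exact M.add_mem hv hw
  smul_mem' := by
    intro c v hv
    have : (fun j => (X : ℂ[X]) ^ k * C ((c • v) j)) =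
        C c • (fun j => (X : ℂ[X]) ^ k * C (v j)) := by
      ext1 j; simp; ring
    simp only [Set.mem_ofPred_eq, this]
    exact M.smul_mem _ hv

lemma mem_degreePiece {n : ℕ} {M : Submodule ℂ[X] (Fin n → ℂ[X])} {k : ℕ} {v : Fin n → ℂ} :
    v ∈ degreePiece M k ↔ (fun j => (X : ℂ[X]) ^ k * C (v j)) ∈ M := Iff.rfl

lemma degreePiece_mono {n : ℕ} (M : Submodule ℂ[X] (Fin n → ℂ[X])) :
    Monotone (degreePiece M) := by
  refine monotone_nat_of_le_succ fun k v hv => ?_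
  rw [mem_degreePiece] at hv ⊢
  convert M.smul_mem (X : ℂ[X]) hv using 1
  ext1 j
  simp [pow_succ]
  ring

lemma eq_sum_components {n : ℕ} {f : Fin n → ℂ[X]} {N : ℕ} (hN : ∀ j, (f j).natDegree < N) :
    f = ∑ k : Fin N, fun j => (X : ℂ[X]) ^ (k : ℕ) * C ((f j).coeff k) := by
  ext1 j
  rw [Finset.sum_apply, Fin.sum_univ_eq_sum_range (fun k => (X : ℂ[X]) ^ k * C ((f j).coeff k)) N]
  conv_lhs => rw [(f j).as_sum_range_C_mul_X_pow' (hN j)]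
  exact Finset.sum_congr rfl fun k _ => mul_comm _ _

lemma exists_natDegree_lt {n : ℕ} (f : Fin n → ℂ[X]) : ∃ N, ∀ j, (f j).natDegree < N :=
  ⟨(Finset.univ.sup fun j => (f j).natDegree) + 1, fun j =>
    Nat.lt_succ_of_le (Finset.le_sup (f := fun j => (f j).natDegree) (Finset.mem_univ j))⟩

/-- An invariant submodule is graded: it contains the homogeneous components of its elements. -/
lemma monomial_component_mem {n : ℕ} {M : Submodule ℂ[X] (Fin n → ℂ[X])}
    (hinv : ∀ t : ℂ, t ≠ 0 → substVec n t '' (M : Set (Fin n → ℂ[X])) = M)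
    {f : Fin n → ℂ[X]} (hf : f ∈ M) {N : ℕ} (hN : ∀ j, (f j).natDegree < N) (k : Fin N) :
    (fun j => (f j).coeff k) ∈ degreePiece M k := by
  rw [mem_degreePiece]
  let t : Fin N → ℂ := fun m => (m : ℕ) + 1
  have ht0 : ∀ m, t m ≠ 0 := fun m => Nat.cast_add_one_ne_zero _
  have htinj : Function.Injective t := by
    intro a b h
    simp only [t, add_left_inj, Nat.cast_inj] at h
    exact Fin.ext h
  let V := Matrix.vandermonde t
  have hdet : IsUnit V.det := (Matrix.det_vandermonde_ne_zero_iff.2 htinj).isUnit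
  have hVV : V⁻¹ * V = 1 := Matrix.nonsing_inv_mul _ hdet
  have hsub : ∀ m, substVec n (t m) f ∈ M := fun m => by
    have : substVec n (t m) f ∈ substVec n (t m) '' (M : Set (Fin n → ℂ[X])) := ⟨f, hf, rfl⟩
    rw [hinv _ (ht0 m)] at this
    exact this
  -- The rows of the inverse Vandermonde matrix separate the components of the `f (t_m z)`.
  have key : (fun j => (X : ℂ[X]) ^ (k : ℕ) * C ((f j).coeff k)) =
      ∑ m, C (V⁻¹ k m) • substVec n (t m) f := by
    ext j l
    have hc : ∀ m, (substVec n (t m) f j).coeff l = (f j).coeff l * t m ^ l := fun m => by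
      simp [substVec, Polynomial.comp_C_mul_X_coeff]
    simp only [Finset.sum_apply, Pi.smul_apply, smul_eq_mul, finsetSum_coeff, coeff_C_mul, hc,
      coeff_X_pow_mul', coeff_C]
    by_cases hl : l < N
    · have h := congrFun (congrFun hVV k) ⟨l, hl⟩
      rw [Matrix.mul_apply] at h
      have h2 : ∑ m, V⁻¹ k m * ((f j).coeff l * t m ^ l) =
          (f j).coeff l * ∑ m, V⁻¹ k m * V m ⟨l, hl⟩ := by
        rw [Finset.mul_sum]
        refine Finset.sum_congr rfl fun m _ => ?_
        simp only [V, Matrix.vandermonde_apply]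
        ring
      rw [h2, h, Matrix.one_apply]
      by_cases hkl : (k : ℕ) = l
      · have : k = ⟨l, hl⟩ := Fin.ext hkl
        simp [this]
      · have h3 : k ≠ ⟨l, hl⟩ := fun h => hkl (congrArg Fin.val h)
        rw [if_neg h3]
        split_ifs <;> first | omega | simp
    · have h0 : (f j).coeff l = 0 := coeff_eq_zero_of_natDegree_lt (by have := hN j; omega)
      have hk := k.2
      have : l - (k : ℕ) ≠ 0 := by omega
      simp [h0, this]
  rw [key]
  exact M.sum_mem fun m _ => M.smul_mem _ (hsub m)

/-- Multiplying independent constant vectors by powers of `z` keeps them independent over `ℂ[z]`. -/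
lemma linearIndependent_X_pow_mul_C {n r : ℕ} {u : Fin r → Fin n → ℂ}
    (hu : LinearIndependent ℂ u) (α : Fin r → ℕ) :
    LinearIndependent ℂ[X] (fun i : Fin r => fun j : Fin n => (X : ℂ[X]) ^ α i * C (u i j)) := by
  rw [Fintype.linearIndependent_iff] at hu ⊢
  intro p hp i
  suffices h : p i * X ^ α i = 0 by simpa using h
  ext k
  refine hu (fun i => (p i * X ^ α i).coeff k) ?_ i
  ext j
  have := congrArg (fun q => coeff q k) (congrFun hp j)
  simp only [Finset.sum_apply, Pi.smul_apply, smul_eq_mul, ← mul_assoc, finsetSum_coeff,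
    coeff_mul_C, Pi.zero_apply, coeff_zero] at this
  simpa only [Finset.sum_apply, Pi.smul_apply, smul_eq_mul, Pi.zero_apply] using this

lemma linearIndependent_C {n r : ℕ} {u : Fin r → Fin n → ℂ} (hu : LinearIndependent ℂ u) :
    LinearIndependent ℂ[X] (fun i : Fin r => fun j : Fin n => C (u i j)) := by
  simpa using linearIndependent_X_pow_mul_C hu 0

/-- Coefficient vectors of an element of `ℂ[z] ⊗ W` lie in `W`. -/
lemma coeff_mem_of_mem_constSpan {n : ℕ} {W : Submodule ℂ (Fin n → ℂ)} {f : Fin n → ℂ[X]}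
    (hf : f ∈ constSpan n W) (k : ℕ) : (fun j => (f j).coeff k) ∈ W := by
  unfold constSpan at hf
  rw [Submodule.mem_span_set'] at hf
  obtain ⟨N, p, g, rfl⟩ := hf
  choose w hw hwg using fun i => (g i).2
  have : (fun j => ((∑ i, p i • (g i : Fin n → ℂ[X])) j).coeff k) =
      ∑ i, (p i).coeff k • w i := by
    ext j
    simp [← hwg]
  rw [this]
  exact W.sum_mem fun i _ => W.smul_mem _ (hw i)

lemma constSpan_span_range {n r : ℕ} (u : Fin r → Fin n → ℂ) :
    constSpan n (Submodule.span ℂ (Set.range u)) =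
      Submodule.span ℂ[X] (Set.range fun i : Fin r => fun j : Fin n => C (u i j)) := by
  apply le_antisymm
  · refine Submodule.span_le.2 ?_
    rintro _ ⟨v, hv, rfl⟩
    obtain ⟨c, rfl⟩ := (Submodule.mem_span_range_iff_exists_fun ℂ).1 hv
    refine (Submodule.mem_span_range_iff_exists_fun ℂ[X]).2 ⟨fun i => C (c i), ?_⟩
    ext1 j
    simp [Finset.sum_apply]
  · refine Submodule.span_le.2 ?_
    rintro _ ⟨i, rfl⟩
    exact Submodule.subset_span ⟨u i, Submodule.subset_span ⟨i, rfl⟩, rfl⟩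

/-- In the basis `u_i` of `M̂`, the submodule generated by the `z^{α_i} u_i` is the product of the
ideals `(z^{α_i})`, so the quotient is computed coordinatewise. -/
lemma nonempty_quotient_equiv {n r : ℕ} {u : Fin r → Fin n → ℂ} (hu : LinearIndependent ℂ u)
    (α : Fin r → ℕ) {M : Submodule ℂ[X] (Fin n → ℂ[X])}
    (hM : M = Submodule.span ℂ[X]
      (Set.range fun i : Fin r => fun j : Fin n => (X : ℂ[X]) ^ α i * C (u i j))) :
    Nonempty
      ((Submodule.span ℂ[X] (Set.range fun i : Fin r => fun j : Fin n => C (u i j)) ⧸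
          Submodule.comap (Submodule.span ℂ[X]
            (Set.range fun i : Fin r => fun j : Fin n => C (u i j))).subtype M)
        ≃ₗ[ℂ[X]] ((i : Fin r) → ℂ[X] ⧸ Ideal.span {(X : ℂ[X]) ^ α i})) := by
  have hC := linearIndependent_C hu
  let b := Module.Basis.span hC
  have hb : ∀ c : Fin r → ℂ[X], ((b.equivFun.symm c : _) : Fin n → ℂ[X]) =
      ∑ i, c i • fun j => C (u i j) := fun c => by
    simp [b, Module.Basis.equivFun_symm_apply, Module.Basis.span_apply]
  have hmap : (Submodule.pi Set.univ fun i => Ideal.span {(X : ℂ[X]) ^ α i}).map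
      (b.equivFun.symm : (Fin r → ℂ[X]) →ₗ[ℂ[X]] _) =
      Submodule.comap (Submodule.span ℂ[X]
        (Set.range fun i : Fin r => fun j : Fin n => C (u i j))).subtype M := by
    ext x
    obtain ⟨c, rfl⟩ := b.equivFun.symm.surjective x
    rw [Submodule.mem_comap, Submodule.subtype_apply, hb, hM,
      Submodule.mem_span_range_iff_exists_fun]
    constructor
    · rintro ⟨c', hc', he⟩
      obtain rfl : c' = c := b.equivFun.symm.injective he
      have hdvd : ∀ i, ∃ d, c' i = X ^ α i * d := fun i =>
        Ideal.mem_span_singleton.1 (hc' i (Set.mem_univ i))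
      choose d hd using hdvd
      refine ⟨d, Finset.sum_congr rfl fun i _ => ?_⟩
      ext1 j
      simp [hd]
      ring
    · rintro ⟨d, hd⟩
      refine ⟨c, fun i _ => Ideal.mem_span_singleton.2 ⟨d i, ?_⟩, rfl⟩
      have h0 : ∑ i, (c i - X ^ α i * d i) • (fun j : Fin n => C (u i j)) = 0 := by
        simp only [sub_smul, Finset.sum_sub_distrib]
        rw [← hd, sub_eq_zero]
        refine Finset.sum_congr rfl fun i _ => ?_
        ext1 j
        simp
        ring
      exact sub_eq_zero.1 (Fintype.linearIndependent_iff.1 hC _ h0 i)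
  exact ⟨(Submodule.Quotient.equiv _ _ b.equivFun.symm hmap).symm.trans
    (Submodule.quotientPi fun i => Ideal.span {(X : ℂ[X]) ^ α i})⟩

/-- affine-chart form of Proposition 2.1.5: a nonzero
`ℂ^×`-invariant `ℂ[z]`-submodule `M ⊆ ℂ[z]^{⊕n}` is free of rank `r ≤ n`, equal to
`⊕_{i=1}^r ℂ[z]·(z^{α_i} u_i)` for `ℂ`-linearly independent constant vectors `u_i`
and `0 ≤ α₁ ≤ ⋯ ≤ α_r`; the submodule `M̂` generated by the constants `u_i` is the
unique submodule of the form `ℂ[z] ⊗_ℂ W` (with `dim_ℂ W = r`) containing `M`, and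
`M̂/M ≅ ⊕_i ℂ[z]/(z^{α_i})` as `ℂ[z]`-modules. -/
theorem invariant_submodule_structure
    (n : ℕ) (hn : 1 ≤ n) (M : Submodule (Polynomial ℂ) (Fin n → Polynomial ℂ))
    (hM : M ≠ ⊥)
    (hinv : ∀ t : ℂ, t ≠ 0 → substVec n t '' (M : Set (Fin n → Polynomial ℂ)) = M) :
    ∃ (r : ℕ) (_ : r ≤ n) (u : Fin r → (Fin n → ℂ)) (α : Fin r → ℕ),
      Module.Free (Polynomial ℂ) M ∧
      Module.finrank (Polynomial ℂ) M = r ∧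
      LinearIndependent ℂ u ∧
      Monotone α ∧
      LinearIndependent (Polynomial ℂ)
        (fun i : Fin r => fun j : Fin n => Polynomial.X ^ α i * Polynomial.C (u i j)) ∧
      M = Submodule.span (Polynomial ℂ)
            (Set.range fun i : Fin r => fun j : Fin n => Polynomial.X ^ α i * Polynomial.C (u i j)) ∧
      (∀ W : Submodule ℂ (Fin n → ℂ), Module.finrank ℂ W = r →
        M ≤ constSpan n W →
        constSpan n W
          = Submodule.span (Polynomial ℂ)
              (Set.range fun i : Fin r => fun j : Fin n => Polynomial.C (u i j))) ∧
      Nonempty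
        ((Submodule.span (Polynomial ℂ)
            (Set.range fun i : Fin r => fun j : Fin n => Polynomial.C (u i j)) ⧸
          Submodule.comap
            (Submodule.span (Polynomial ℂ)
              (Set.range fun i : Fin r => fun j : Fin n => Polynomial.C (u i j))).subtype M)
          ≃ₗ[Polynomial ℂ]
         ((i : Fin r) → Polynomial ℂ ⧸ Ideal.span {(Polynomial.X : Polynomial ℂ) ^ α i})) := by
  obtain ⟨r, u, α, hu, hα, hW⟩ := exists_adapted_basis (degreePiece M) (degreePiece_mono M)
  have hli := linearIndependent_X_pow_mul_C hu α
  have hmem : ∀ i, (fun j => (X : ℂ[X]) ^ α i * C (u i j)) ∈ M := fun i => by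
    rw [← mem_degreePiece, hW]
    exact Submodule.subset_span ⟨i, le_refl (α i), rfl⟩
  have hspan : M = Submodule.span ℂ[X]
      (Set.range fun i : Fin r => fun j : Fin n => (X : ℂ[X]) ^ α i * C (u i j)) := by
    apply le_antisymm
    · intro f hf
      obtain ⟨N, hN⟩ := exists_natDegree_lt f
      rw [eq_sum_components hN]
      refine Submodule.sum_mem _ fun k _ => ?_
      -- Each `z^k f_k` is generated, since `f_k` is spanned by the `u_i` with `α_i ≤ k`.
      rw [← mem_degreePiece]
      have hle : degreePiece M k ≤ degreePiece (Submodule.span ℂ[X]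
          (Set.range fun i : Fin r => fun j : Fin n => (X : ℂ[X]) ^ α i * C (u i j))) k := by
        rw [hW]
        refine Submodule.span_le.2 ?_
        rintro _ ⟨i, hi, rfl⟩
        refine degreePiece_mono _ hi ?_
        exact mem_degreePiece.2 (Submodule.subset_span ⟨i, rfl⟩)
      exact hle (monomial_component_mem hinv hf hN k)
    · refine Submodule.span_le.2 ?_
      rintro _ ⟨i, rfl⟩
      exact hmem i
  have hr : r ≤ n := by simpa using hu.fintype_card_le_finrank
  refine ⟨r, hr, u, α, ?_, ?_, hu, hα, hli, hspan, ?_, nonempty_quotient_equiv hu α hspan⟩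
  · rw [hspan]
    exact Module.Free.of_basis (Module.Basis.span hli)
  · rw [hspan]
    simpa using finrank_span_eq_card hli
  · intro W hWr hMW
    have huW : Submodule.span ℂ (Set.range u) ≤ W := by
      refine Submodule.span_le.2 ?_
      rintro _ ⟨i, rfl⟩
      simpa [coeff_X_pow_mul'] using coeff_mem_of_mem_constSpan (hMW (hmem i)) (α i)
    have heq : Submodule.span ℂ (Set.range u) = W :=
      Submodule.eq_of_le_of_finrank_eq huW (by rw [finrank_span_eq_card hu, hWr, Fintype.card_fin])
    rw [← heq, constSpan_span_range]
end

section
/- Fix integers 0 ≤ α₁ ≤ ⋯ ≤ α_r, and for B ∈ GL(r, ℂ) let M(B) denote the ℂ[z]-submodule of ℂ[z]^{⊕r} generated by the columns of the matrix B · Diag(z^{α₁}, …, z^{α_r}). Then for B₁, B₂ ∈ GL(r, ℂ), one has M(B₁) = M(B₂) if and only if (B₁⁻¹B₂)_{ij} = 0 for all pairs (i, j) with α_i > α_j; that is, if and only if B₁⁻¹B₂ is block upper triangular with respect to the block decomposition of {1, …, r} determined by the multiplicities of the values in (α₁, …, α_r). (The criterion, established in Section 2.1, for when two diagonalized presentations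 determine the same fixed submodule; equivalently, they determine the same flag.) -/
/-!
Writing `D = Diag(z^{α₁}, …, z^{α_r})`, the submodule `M(B) = B · D · ℂ[z]^r` consists, for
invertible `B`, of the vectors `v` such that `z^{α_i}` divides the `i`-th coordinate of `B⁻¹ v`
(`mem_Mspan_iff`). The `j`-th generator of `M(B₂)` has `B₁⁻¹`-coordinates
`(B₁⁻¹B₂)_{ij} z^{α_j}`, and a constant multiple of `z^{α_j}` is divisible by `z^{α_i}` with
`α_j < α_i` only if the constant vanishes. Hence `M(B₂) ≤ M(B₁)` iff `B₁⁻¹B₂` is block triangular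
with respect to `α` (`Mspan_le_iff`). Since the inverse of a block triangular matrix is block
triangular, this inclusion forces the opposite one.
-/

open Polynomial

/-- The `ℂ[z]`-submodule of `ℂ[z]^{⊕r}` generated by the columns of
`B · Diag(z^{α₁}, …, z^{α_r})`, for a constant matrix `B`. -/
noncomputable def Mspan (r : ℕ) (α : Fin r → ℕ) (B : Matrix (Fin r) (Fin r) ℂ) :
    Submodule (Polynomial ℂ) (Fin r → Polynomial ℂ) :=
  Submodule.span (Polynomial ℂ)
    (Set.range fun j : Fin r => fun i : Fin r =>
      (B.map Polynomial.C *
        Matrix.diagonal fun i' : Fin r => (Polynomial.X : Polynomial ℂ) ^ α i') i j)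

/-- Over an invertible constant matrix `B`, membership in `Mspan` is a divisibility condition on
the coordinates with respect to the basis of columns of `B`. -/
lemma mem_Mspan_iff {r : ℕ} (α : Fin r → ℕ) {B : Matrix (Fin r) (Fin r) ℂ} (hB : IsUnit B)
    (v : Fin r → ℂ[X]) :
    v ∈ Mspan r α B ↔ ∀ i, X ^ α i ∣ (B⁻¹.map C).mulVec v i := by
  have hdet : IsUnit B.det := (Matrix.isUnit_iff_isUnit_det B).1 hB
  have hl : B⁻¹.map C * B.map C = (1 : Matrix (Fin r) (Fin r) ℂ[X]) := by
    rw [← Matrix.map_mul, Matrix.nonsing_inv_mul B hdet]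
    exact Matrix.map_one _ C_0 C_1
  have hr : B.map C * B⁻¹.map C = (1 : Matrix (Fin r) (Fin r) ℂ[X]) := by
    rw [← Matrix.map_mul, Matrix.mul_nonsing_inv B hdet]
    exact Matrix.map_one _ C_0 C_1
  have hspan : v ∈ Mspan r α B ↔ ∃ c : Fin r → ℂ[X],
      (B.map C * Matrix.diagonal fun i => (X : ℂ[X]) ^ α i).mulVec c = v := by
    have h := Matrix.range_mulVecLin (B.map C * Matrix.diagonal fun i => (X : ℂ[X]) ^ α i)
    change v ∈ Submodule.span _ (Set.range
      (B.map C * Matrix.diagonal fun i => (X : ℂ[X]) ^ α i).col) ↔ _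
    rw [← h]
    rfl
  rw [hspan]
  constructor
  · rintro ⟨c, rfl⟩ i
    rw [Matrix.mulVec_mulVec, ← Matrix.mul_assoc, hl, Matrix.one_mul, Matrix.mulVec_diagonal]
    exact Dvd.intro _ rfl
  · intro h
    choose c hc using h
    refine ⟨c, ?_⟩
    have hd : (Matrix.diagonal fun i => (X : ℂ[X]) ^ α i).mulVec c = (B⁻¹.map C).mulVec v := by
      funext i
      rw [Matrix.mulVec_diagonal, hc]
    rw [← Matrix.mulVec_mulVec, hd, Matrix.mulVec_mulVec, hr, Matrix.one_mulVec]

lemma Mspan_le_iff {r : ℕ} (α : Fin r → ℕ) {B₁ : Matrix (Fin r) (Fin r) ℂ} (h₁ : IsUnit B₁)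
    (B₂ : Matrix (Fin r) (Fin r) ℂ) :
    Mspan r α B₂ ≤ Mspan r α B₁ ↔ (B₁⁻¹ * B₂).BlockTriangular α := by
  have hgen : ∀ i j, (B₁⁻¹.map C).mulVec (fun i' => (B₂.map C *
      Matrix.diagonal fun k => (X : ℂ[X]) ^ α k) i' j) i = C ((B₁⁻¹ * B₂) i j) * X ^ α j := by
    intro i j
    change (B₁⁻¹.map C * (B₂.map C * Matrix.diagonal fun k => (X : ℂ[X]) ^ α k)) i j = _
    rw [← Matrix.mul_assoc, ← Matrix.map_mul, Matrix.mul_diagonal, Matrix.map_apply]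
  rw [Mspan, Submodule.span_le, Set.range_subset_iff]
  simp only [SetLike.mem_coe, mem_Mspan_iff α h₁, hgen]
  constructor
  · intro h i j hij
    simpa using X_pow_dvd_iff.1 (h j i) (α j) hij
  · intro h j i
    by_cases hij : α j < α i
    · simp [h hij]
    · exact (pow_dvd_pow X (not_lt.1 hij)).mul_left _

/-- Section 2.1: for `B₁, B₂ ∈ GL(r, ℂ)` and
`0 ≤ α₁ ≤ ⋯ ≤ α_r`, the submodules generated by the columns of
`B₁ · Diag(z^{α_i})` and `B₂ · Diag(z^{α_i})` coincide if and only if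
`(B₁⁻¹B₂)_{ij} = 0` for all pairs `(i,j)` with `α_i > α_j`, i.e. iff `B₁⁻¹B₂`
is block upper triangular for the blocks determined by the multiplicities of
the values of `α`. -/
theorem diagonalized_presentations_same_submodule_iff
    (r : ℕ) (α : Fin r → ℕ) (hα : Monotone α)
    (B₁ B₂ : Matrix (Fin r) (Fin r) ℂ) (h₁ : IsUnit B₁) (h₂ : IsUnit B₂) :
    Mspan r α B₁ = Mspan r α B₂ ↔
      ∀ i j : Fin r, α j < α i → (B₁⁻¹ * B₂) i j = 0 := by
  constructor
  · intro h
    exact (Mspan_le_iff α h₁ B₂).1 h.ge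
  · intro h
    have hT : (B₁⁻¹ * B₂).BlockTriangular α := h
    refine le_antisymm ((Mspan_le_iff α h₂ B₁).2 ?_) ((Mspan_le_iff α h₁ B₂).2 hT)
    have hdet₁ : IsUnit B₁.det := (Matrix.isUnit_iff_isUnit_det B₁).1 h₁
    have hinv : (B₁⁻¹ * B₂)⁻¹ = B₂⁻¹ * B₁ := by
      rw [Matrix.mul_inv_rev, Matrix.nonsing_inv_nonsing_inv B₁ hdet₁]
    have hu : IsUnit (B₁⁻¹ * B₂) := (Matrix.isUnit_nonsing_inv_iff.2 h₁).mul h₂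
    have := hu.invertible
    rw [← hinv]
    exact Matrix.blockTriangular_inv_of_blockTriangular hT
end

section
/- Fix integers n ≥ r ≥ 1 and a nondecreasing sequence 0 ≤ α₁ ≤ ⋯ ≤ α_r of nonnegative integers; let a₁ < a₂ < ⋯ < a_k be its distinct values, occurring with multiplicities m₁, …, m_k (so m₁ + ⋯ + m_k = r). For a flag V₁ ⊊ V₂ ⊊ ⋯ ⊊ V_k of ℂ-subspaces of ℂⁿ with dim V_I = m₁ + ⋯ + m_I for each I, let M_V denote the ℂ[z]-submodule of ℂ[z]^{⊕n} generated by all elements z^{a_I}·v with 1 ≤ I ≤ k and v ∈ V_I (constant vectors). Then the assignment V ↦ M_V is a bijection from the set of all such flags onto the set of ℂ^×-invariant ℂ[z]-submodules M ⊆ ℂ[z]^{⊕n} such that ℂ[z]^{⊕n}/M is isomorphic as a ℂ[z]-module to ℂ[z]^{⊕(n−r)} ⊕ (⊕_{i=1}^r ℂ[z]/(z^{α_i})). (One-chart form of Theorem 2.1.9: the S¹-fixed points of the Quot scheme with given local type form a flag manifold.) -/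
/-!
An invariant submodule `M` is graded: `M = ⨁ z ^ d · W d` for an increasing sequence `W` of
subspaces of `ℂⁿ` (`eq_gradedSub_pieces`). The submodule `M_V` is the graded submodule whose
sequence is `W d = V_I` for the largest `I` with `a_I ≤ d`, and `W d = 0` if there is none
(`MV_eq_gradedSub`, `flagFiltration_eq`). It remains to see that, for graded `M`, the quotient
has the prescribed type if and only if `dim W d = #{i | α i ≤ d}` for all `d`: such a sequence
jumps only at the `a_I`, with jumps `m_I`, so it is the same thing as a flag.

If the dimensions are as prescribed, a basis of `ℂⁿ` adapted to `W` diagonalises `M` and yields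
the quotient (`quotient_gradedSub_equiv`). Conversely, for `Q = ℂ[z]^{⊕n} / M` one has
`z ^ d Q / z ^ (d+1) Q ≅ ℂⁿ / W d`, so the isomorphism class of `Q` determines all `dim W d`
(`finrank_eq_of_quotient_equiv`); comparison with the coordinate flag gives their values.
-/

open Polynomial

/-- The `ℂ[z]`-submodule `M_V ⊆ ℂ[z]^{⊕n}` generated by the elements `z^{a_I}·v`,
`v ∈ V_I` a constant vector, for a flag `V` indexed by `Fin k` with exponents `a`. -/
noncomputable def MV (n k : ℕ) (a : Fin k → ℕ) (V : Fin k → Submodule ℂ (Fin n → ℂ)) :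
    Submodule (Polynomial ℂ) (Fin n → Polynomial ℂ) :=
  Submodule.span (Polynomial ℂ)
    (⋃ I : Fin k,
      (fun (v : Fin n → ℂ) (j : Fin n) => (Polynomial.X : Polynomial ℂ) ^ a I * Polynomial.C (v j))
        '' (V I : Set (Fin n → ℂ)))

/-! ### Homogeneous components of vectors of polynomials -/

/-- The degree-`d` coefficient vector of a vector of polynomials. -/
noncomputable def coeffVec (n d : ℕ) : (Fin n → ℂ[X]) →ₗ[ℂ] (Fin n → ℂ) where
  toFun f j := (f j).coeff d
  map_add' f g := by ext; simp
  map_smul' c f := by ext; simp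

/-- The homogeneous vector `z ^ d · v`, for a constant vector `v`. -/
noncomputable def monoVec (n d : ℕ) : (Fin n → ℂ) →ₗ[ℂ] (Fin n → ℂ[X]) where
  toFun v j := X ^ d * C (v j)
  map_add' f g := by ext1 j; simp [mul_add]
  map_smul' c f := by ext1 j; simp only [Pi.smul_apply, smul_eq_C_mul, smul_eq_mul, C_mul, RingHom.id_apply]; ring

@[simp] lemma coeffVec_apply (n d : ℕ) (f : Fin n → ℂ[X]) (j : Fin n) :
    coeffVec n d f j = (f j).coeff d := rfl

@[simp] lemma monoVec_apply (n d : ℕ) (v : Fin n → ℂ) (j : Fin n) :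
    monoVec n d v j = X ^ d * C (v j) := rfl

lemma coeffVec_monoVec (n d e : ℕ) (v : Fin n → ℂ) :
    coeffVec n d (monoVec n e v) = if d = e then v else 0 := by
  ext j
  split_ifs with h <;> simp [coeff_X_pow, h]

lemma X_pow_smul_monoVec (n d e : ℕ) (v : Fin n → ℂ) :
    (X ^ e : ℂ[X]) • monoVec n d v = monoVec n (e + d) v := by
  ext1 j
  simp [pow_add, mul_assoc]

lemma exists_eq_sum_monoVec (n : ℕ) (f : Fin n → ℂ[X]) :
    ∃ N, f = ∑ d ∈ Finset.range N, monoVec n d (coeffVec n d f) := by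
  refine ⟨(Finset.univ.sup fun j => (f j).natDegree) + 1, ?_⟩
  ext1 j
  rw [Finset.sum_apply]
  have hj : (f j).natDegree < (Finset.univ.sup fun j => (f j).natDegree) + 1 :=
    Nat.lt_succ_of_le (Finset.le_sup (f := fun j => (f j).natDegree) (Finset.mem_univ j))
  conv_lhs => rw [(f j).as_sum_range_C_mul_X_pow' hj]
  exact Finset.sum_congr rfl fun d _ => (X_pow_mul_C _ _).symm

/-! ### Graded submodules and invariance -/

/-- The graded submodule of `ℂ[z]^{⊕n}` whose degree-`d` piece is `z ^ d · W d`, for an increasing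
sequence `W` of subspaces of `ℂⁿ`. -/
noncomputable def gradedSub (n : ℕ) (W : ℕ →o Submodule ℂ (Fin n → ℂ)) :
    Submodule ℂ[X] (Fin n → ℂ[X]) where
  carrier := {f | ∀ d, coeffVec n d f ∈ W d}
  add_mem' hf hg d := by rw [map_add]; exact add_mem (hf d) (hg d)
  zero_mem' d := by rw [map_zero]; exact zero_mem _
  smul_mem' p f hf d := by
    have : coeffVec n d (p • f)
        = ∑ x ∈ Finset.HasAntidiagonal.antidiagonal d, p.coeff x.1 • coeffVec n x.2 f := by
      ext j
      simp [coeff_mul, Finset.sum_apply]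
    rw [this]
    refine Submodule.sum_mem _ fun x hx => Submodule.smul_mem _ _ (W.monotone ?_ (hf x.2))
    have := Finset.HasAntidiagonal.mem_antidiagonal.1 hx
    omega

lemma mem_gradedSub {n : ℕ} {W : ℕ →o Submodule ℂ (Fin n → ℂ)} {f : Fin n → ℂ[X]} :
    f ∈ gradedSub n W ↔ ∀ d, coeffVec n d f ∈ W d := Iff.rfl

lemma monoVec_mem_gradedSub {n : ℕ} {W : ℕ →o Submodule ℂ (Fin n → ℂ)} {d : ℕ} {v : Fin n → ℂ} :
    monoVec n d v ∈ gradedSub n W ↔ v ∈ W d := by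
  refine ⟨fun h => by simpa [coeffVec_monoVec] using h d, fun h e => ?_⟩
  rw [coeffVec_monoVec]
  split_ifs with he
  · exact he ▸ h
  · exact zero_mem _

lemma gradedSub_injective (n : ℕ) : Function.Injective (gradedSub n) := by
  intro W W' h
  ext d v
  rw [← monoVec_mem_gradedSub, h, monoVec_mem_gradedSub]

lemma coeffVec_substVec (n d : ℕ) (t : ℂ) (f : Fin n → ℂ[X]) :
    coeffVec n d (substVec n t f) = t ^ d • coeffVec n d f := by
  ext j
  simp only [substVec, coeffVec_apply, comp_C_mul_X_coeff, Pi.smul_apply, smul_eq_mul]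
  exact mul_comm _ _

lemma substVec_image_gradedSub (n : ℕ) (W : ℕ →o Submodule ℂ (Fin n → ℂ)) (t : ℂ) (ht : t ≠ 0) :
    substVec n t '' (gradedSub n W : Set (Fin n → ℂ[X])) = gradedSub n W := by
  have key : ∀ t : ℂ, ∀ f ∈ gradedSub n W, substVec n t f ∈ gradedSub n W := fun t f hf d => by
    rw [coeffVec_substVec]
    exact Submodule.smul_mem _ _ (hf d)
  refine Set.Subset.antisymm ?_ fun f hf => ⟨substVec n t⁻¹ f, key _ f hf, ?_⟩
  · rintro _ ⟨f, hf, rfl⟩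
    exact key t f hf
  · ext j d
    simp [substVec, comp_C_mul_X_coeff, ht]

/-- The degree-`d` pieces of a submodule `M`, divided by `z ^ d`. They increase with `d` because
`M` is stable under multiplication by `z`. -/
noncomputable def pieces (n : ℕ) (M : Submodule ℂ[X] (Fin n → ℂ[X])) :
    ℕ →o Submodule ℂ (Fin n → ℂ) where
  toFun d := (M.restrictScalars ℂ).comap (monoVec n d)
  monotone' d e hde v hv := by
    have := M.smul_mem (X ^ (e - d)) hv
    rwa [X_pow_smul_monoVec, Nat.sub_add_cancel hde] at this

lemma mem_pieces {n d : ℕ} {M : Submodule ℂ[X] (Fin n → ℂ[X])} {v : Fin n → ℂ} :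
    v ∈ pieces n M d ↔ monoVec n d v ∈ M := Iff.rfl

/-- If `f = ∑ z ^ d · v_d` lies in an invariant `M`, then so does every `∑ t ^ d z ^ d · v_d`,
`t ≠ 0`. A linear functional on the quotient by `M` turns this into a polynomial in `t` with
infinitely many zeros, so every `z ^ d · v_d` vanishes in the quotient. -/
lemma monoVec_coeffVec_mem (n : ℕ) (M : Submodule ℂ[X] (Fin n → ℂ[X]))
    (hM : ∀ t : ℂ, t ≠ 0 → substVec n t '' (M : Set (Fin n → ℂ[X])) = M)
    (f : Fin n → ℂ[X]) (hf : f ∈ M) (d : ℕ) : monoVec n d (coeffVec n d f) ∈ M := by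
  obtain ⟨N, hN⟩ := exists_eq_sum_monoVec n f
  by_cases hd : d < N
  swap
  · have : coeffVec n d f = 0 := by
      rw [hN, map_sum]
      refine Finset.sum_eq_zero fun e he => ?_
      rw [coeffVec_monoVec, if_neg]
      rintro rfl
      exact hd (Finset.mem_range.1 he)
    rw [this, map_zero]
    exact zero_mem _
  have hsub : ∀ t : ℂ, substVec n t f
      = ∑ e ∈ Finset.range N, t ^ e • monoVec n e (coeffVec n e f) := by
    intro t
    ext j e
    rw [← coeffVec_apply, ← coeffVec_apply]
    rw [coeffVec_substVec]
    conv_lhs => rw [hN]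
    simp only [map_sum, map_smul, coeffVec_monoVec, Finset.smul_sum]
    refine congrFun (Finset.sum_congr rfl fun i _ => ?_) j
    split_ifs with h
    · rw [h]
    · simp
  let π : (Fin n → ℂ[X]) →ₗ[ℂ] ((Fin n → ℂ[X]) ⧸ M) := M.mkQ.restrictScalars ℂ
  have hπ : ∀ g, π g = 0 ↔ g ∈ M := fun g => Submodule.Quotient.mk_eq_zero M
  rw [← hπ, ← Module.forall_dual_apply_eq_zero_iff ℂ]
  intro l
  let P : ℂ[X] := ∑ e ∈ Finset.range N, C (l (π (monoVec n e (coeffVec n e f)))) * X ^ e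
  have hP : P = 0 := by
    refine Polynomial.eq_zero_of_infinite_isRoot P
      (Set.Infinite.mono (s := {0}ᶜ) (fun t ht => ?_) (Set.finite_singleton (0 : ℂ)).infinite_compl)
    have hmem : substVec n t f ∈ M := by
      have : substVec n t f ∈ substVec n t '' (M : Set (Fin n → ℂ[X])) := ⟨f, hf, rfl⟩
      rwa [hM t ht] at this
    rw [← hπ, hsub] at hmem
    have := congrArg l hmem
    simp only [map_sum, map_smul, map_zero, smul_eq_mul] at this
    simp only [Set.mem_ofPred_eq, IsRoot.def, P, eval_finsetSum, eval_mul, eval_C, eval_pow, eval_X]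
    rw [← this]
    exact Finset.sum_congr rfl fun e _ => mul_comm _ _
  have := congrArg (fun p => p.coeff d) hP
  simpa [P, finsetSum_coeff, coeff_C_mul, coeff_X_pow, hd] using this

lemma eq_gradedSub_pieces (n : ℕ) (M : Submodule ℂ[X] (Fin n → ℂ[X]))
    (hM : ∀ t : ℂ, t ≠ 0 → substVec n t '' (M : Set (Fin n → ℂ[X])) = M) :
    M = gradedSub n (pieces n M) := by
  ext f
  refine ⟨fun hf d => monoVec_coeffVec_mem n M hM f hf d, fun hf => ?_⟩
  obtain ⟨N, hN⟩ := exists_eq_sum_monoVec n f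
  rw [hN]
  exact Submodule.sum_mem _ fun d _ => hf d

/-! ### The layers `z ^ d Q / z ^ (d+1) Q` -/

/-- `{q | z ^ d q ∈ z ^ (d+1) Q}`; the quotient of `Q` by it is `z ^ d Q / z ^ (d+1) Q`. -/
noncomputable def layerKer (Q : Type*) [AddCommGroup Q] [Module ℂ[X] Q] (d : ℕ) :
    Submodule ℂ[X] Q :=
  (LinearMap.range (LinearMap.lsmul ℂ[X] Q (X ^ (d + 1)))).comap (LinearMap.lsmul ℂ[X] Q (X ^ d))

lemma mem_layerKer {Q : Type*} [AddCommGroup Q] [Module ℂ[X] Q] {d : ℕ} {q : Q} :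
    q ∈ layerKer Q d ↔ ∃ q' : Q, (X ^ (d + 1) : ℂ[X]) • q' = (X ^ d : ℂ[X]) • q := Iff.rfl

lemma map_layerKer {Q Q' : Type*} [AddCommGroup Q] [Module ℂ[X] Q] [AddCommGroup Q']
    [Module ℂ[X] Q'] (e : Q ≃ₗ[ℂ[X]] Q') (d : ℕ) :
    (layerKer Q d).map (e : Q →ₗ[ℂ[X]] Q') = layerKer Q' d := by
  ext q
  constructor
  · rintro ⟨q, hq, rfl⟩
    obtain ⟨q', h⟩ := mem_layerKer.1 hq
    exact mem_layerKer.2 ⟨e q', by simp [← map_smul, h]⟩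
  · intro hq
    obtain ⟨q', h⟩ := mem_layerKer.1 hq
    exact ⟨e.symm q, mem_layerKer.2 ⟨e.symm q', by simp [← map_smul, h]⟩, by simp⟩

/-- Sending a constant vector to its class identifies `ℂⁿ / W d` with `z ^ d Q / z ^ (d+1) Q`
for `Q = ℂ[z]^{⊕n} / gradedSub n W`. -/
lemma finrank_layer (n : ℕ) (W : ℕ →o Submodule ℂ (Fin n → ℂ)) (d : ℕ) :
    Module.finrank ℂ (((Fin n → ℂ[X]) ⧸ gradedSub n W) ⧸
      layerKer ((Fin n → ℂ[X]) ⧸ gradedSub n W) d) + Module.finrank ℂ (W d) = n := by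
  let φ : (Fin n → ℂ) →ₗ[ℂ] (((Fin n → ℂ[X]) ⧸ gradedSub n W) ⧸
      layerKer ((Fin n → ℂ[X]) ⧸ gradedSub n W) d) :=
    ((layerKer ((Fin n → ℂ[X]) ⧸ gradedSub n W) d).mkQ.restrictScalars ℂ) ∘ₗ
      ((gradedSub n W).mkQ.restrictScalars ℂ) ∘ₗ monoVec n 0
  have hker : LinearMap.ker φ = W d := by
    ext v
    have h0 : v ∈ LinearMap.ker φ ↔
        (gradedSub n W).mkQ (monoVec n 0 v) ∈ layerKer ((Fin n → ℂ[X]) ⧸ gradedSub n W) d :=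
      Submodule.Quotient.mk_eq_zero _
    rw [h0, mem_layerKer]
    constructor
    · rintro ⟨q, hq⟩
      obtain ⟨g, rfl⟩ := (gradedSub n W).mkQ_surjective q
      rw [← map_smul, ← map_smul, X_pow_smul_monoVec, add_zero, eq_comm, Submodule.mkQ_apply,
        Submodule.mkQ_apply, Submodule.Quotient.eq] at hq
      have := hq d
      rw [map_sub, coeffVec_monoVec, if_pos rfl] at this
      have hz : coeffVec n d ((X ^ (d + 1) : ℂ[X]) • g) = 0 := by
        ext j
        simp [coeff_X_pow_mul']
      rwa [hz, sub_zero] at this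
    · intro hv
      refine ⟨0, ?_⟩
      rw [smul_zero, ← map_smul, X_pow_smul_monoVec, eq_comm, Submodule.mkQ_apply,
        Submodule.Quotient.mk_eq_zero]
      exact monoVec_mem_gradedSub.2 hv
  have hsurj : Function.Surjective φ := by
    intro y
    obtain ⟨q, rfl⟩ := Submodule.mkQ_surjective _ y
    obtain ⟨f, rfl⟩ := Submodule.mkQ_surjective _ q
    refine ⟨coeffVec n 0 f, ?_⟩
    refine (Submodule.Quotient.eq _).2 (mem_layerKer.2
      ⟨(gradedSub n W).mkQ (fun j => - (f j).divX), ?_⟩)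
    change _ = (X ^ d : ℂ[X]) • ((gradedSub n W).mkQ (monoVec n 0 (coeffVec n 0 f))
      - (gradedSub n W).mkQ f)
    rw [← map_sub, ← map_smul, ← map_smul]
    congr 1
    ext1 j
    have := (f j).X_mul_divX_add
    simp only [Pi.smul_apply, Pi.sub_apply, monoVec_apply, coeffVec_apply, smul_eq_mul, pow_zero]
    linear_combination (- X ^ d) * this
  have := LinearMap.finrank_range_add_finrank_ker φ
  rwa [LinearMap.range_eq_top.2 hsurj, finrank_top, hker, Module.finrank_fin_fun] at this

lemma finrank_eq_of_quotient_equiv (n : ℕ) (W W' : ℕ →o Submodule ℂ (Fin n → ℂ))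
    (e : ((Fin n → ℂ[X]) ⧸ gradedSub n W) ≃ₗ[ℂ[X]] ((Fin n → ℂ[X]) ⧸ gradedSub n W')) (d : ℕ) :
    Module.finrank ℂ (W d) = Module.finrank ℂ (W' d) := by
  have h := finrank_layer n W d
  have h' := finrank_layer n W' d
  have := ((Submodule.Quotient.equiv _ _ e (map_layerKer e d)).restrictScalars ℂ).finrank_eq
  omega

/-! ### Adapted bases and the quotient by a graded submodule -/

/-- Greedy choice of an independent family in subspaces that are large enough: the `i`-th vector
is taken outside the span of the previous `i` vectors. -/
lemma exists_linearIndependent_mem {E : Type*} [AddCommGroup E] [Module ℂ E]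
    [FiniteDimensional ℂ E] : ∀ (N : ℕ) (U : Fin N → Submodule ℂ E),
    (∀ i : Fin N, (i : ℕ) + 1 ≤ Module.finrank ℂ (U i)) →
    ∃ b : Fin N → E, LinearIndependent ℂ b ∧ ∀ i, b i ∈ U i := by
  intro N
  induction N with
  | zero => exact fun U _ => ⟨Fin.elim0, linearIndependent_empty_type, fun i => i.elim0⟩
  | succ N ih =>
    intro U hU
    obtain ⟨b, hb, hbU⟩ := ih (fun i => U i.castSucc) (fun i => hU i.castSucc)
    obtain ⟨v, hv, hvs⟩ : ∃ v ∈ U (Fin.last N), v ∉ Submodule.span ℂ (Set.range b) := by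
      by_contra! h
      have h1 := Submodule.finrank_mono (show U (Fin.last N) ≤ Submodule.span ℂ (Set.range b) from h)
      have h2 := finrank_span_eq_card hb
      have h3 := hU (Fin.last N)
      simp at h2 h3
      omega
    refine ⟨Fin.snoc b v, hb.finSnoc hvs, fun i => ?_⟩
    refine Fin.lastCases ?_ (fun i => ?_) i
    · simpa using hv
    · simpa using hbU i

/-- A basis of `ℂⁿ` adapted to a filtration with the dimensions prescribed by `α`. -/
lemma exists_adapted_basis_s5 (r s : ℕ) (α : Fin r → ℕ) (hα : Monotone α)
    (W : ℕ →o Submodule ℂ (Fin (r + s) → ℂ))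
    (hW : ∀ d, Module.finrank ℂ (W d) = (Finset.univ.filter fun i => α i ≤ d).card) :
    ∃ b : Module.Basis (Fin (r + s)) ℂ (Fin (r + s) → ℂ),
      ∀ d, W d = Submodule.span ℂ (b '' (Fin.castAdd s '' {i | α i ≤ d})) := by
  let U : Fin (r + s) → Submodule ℂ (Fin (r + s) → ℂ) :=
    Fin.addCases (fun i => W (α i)) (fun _ => ⊤)
  have hUl : ∀ i, U (Fin.castAdd s i) = W (α i) := fun i => Fin.addCases_left i
  have hUr : ∀ i, U (Fin.natAdd r i) = ⊤ := fun i => Fin.addCases_right i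
  obtain ⟨b, hb, hbU⟩ := exists_linearIndependent_mem (r + s) U (by
      intro j
      refine Fin.addCases (fun i => ?_) (fun i => ?_) j
      · rw [hUl, hW, Fin.val_castAdd]
        rw [← Fin.card_Iic]
        exact Finset.card_le_card fun x hx => by
          simpa using hα (Finset.mem_Iic.1 hx)
      · rw [hUr, finrank_top, Module.finrank_fin_fun, Fin.val_natAdd]
        omega)
  let B := basisOfLinearIndependentOfCardEqFinrank' b hb (by simp)
  have hB : ⇑B = b := by simp [B]
  refine ⟨B, fun d => (Submodule.eq_of_le_of_finrank_eq ?_ ?_).symm⟩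
  · rw [Submodule.span_le]
    rintro _ ⟨_, ⟨i, hi, rfl⟩, rfl⟩
    have := hbU (Fin.castAdd s i)
    rw [hUl] at this
    rw [hB]
    exact W.monotone hi this
  · have hli : LinearIndependent ℂ (fun i : {i // α i ≤ d} => b (Fin.castAdd s i)) :=
      hb.comp _ ((Fin.castAdd_injective r s).comp Subtype.val_injective)
    have := finrank_span_eq_card hli
    rw [hW, hB, Set.image_image, ← Fintype.card_subtype, ← this, Set.image_eq_range]
    rfl

/-- In coordinates for an adapted basis, `gradedSub n W` consists of the vectors whose `i`-th
coordinate is divisible by `z ^ α i` for `i < r` and whose other coordinates vanish. -/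
lemma quotient_gradedSub_equiv (n r : ℕ) (hrn : r ≤ n) (α : Fin r → ℕ) (hα : Monotone α)
    (W : ℕ →o Submodule ℂ (Fin n → ℂ))
    (hW : ∀ d, Module.finrank ℂ (W d) = (Finset.univ.filter fun i => α i ≤ d).card) :
    Nonempty (((Fin n → ℂ[X]) ⧸ gradedSub n W) ≃ₗ[ℂ[X]]
      ((Fin (n - r) → ℂ[X]) × ((i : Fin r) → ℂ[X] ⧸ Ideal.span {(X : ℂ[X]) ^ α i}))) := by
  obtain ⟨s, rfl⟩ := Nat.exists_eq_add_of_le hrn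
  rw [Nat.add_sub_cancel_left]
  obtain ⟨b, hb⟩ := exists_adapted_basis_s5 r s α hα W hW
  let A := LinearMap.toMatrix' (b.equivFun : (Fin (r + s) → ℂ) →ₗ[ℂ] (Fin (r + s) → ℂ))
  let A' := LinearMap.toMatrix' (b.equivFun.symm : (Fin (r + s) → ℂ) →ₗ[ℂ] (Fin (r + s) → ℂ))
  have hAA' : A * A' = 1 := by
    rw [← LinearMap.toMatrix'_comp]
    simp
  let L : (Fin (r + s) → ℂ[X]) →ₗ[ℂ[X]] (Fin (r + s) → ℂ[X]) := (A.map C).mulVecLin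
  have hL : Function.Surjective L := by
    intro p
    refine ⟨(A'.map C).mulVec p, ?_⟩
    simp only [L, Matrix.mulVecLin_apply, Matrix.mulVec_mulVec]
    rw [← Matrix.map_mul, hAA', Matrix.map_one _ C_0 C_1, Matrix.one_mulVec]
  have hcoeff : ∀ f d j, (L f j).coeff d = b.repr (coeffVec (r + s) d f) j := by
    intro f d j
    have : b.equivFun (coeffVec (r + s) d f) = A.mulVec (coeffVec (r + s) d f) := by
      rw [← Matrix.toLin'_apply, Matrix.toLin'_toMatrix']
      rfl
    rw [← b.equivFun_apply, this]
    simp [L, Matrix.mulVec, dotProduct, finsetSum_coeff]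
  let Φ : (Fin (r + s) → ℂ[X]) →ₗ[ℂ[X]]
      ((Fin s → ℂ[X]) × ((i : Fin r) → ℂ[X] ⧸ Ideal.span {(X : ℂ[X]) ^ α i})) :=
    (LinearMap.prod (LinearMap.pi fun j => LinearMap.proj (Fin.natAdd r j))
      (LinearMap.pi fun i => (Ideal.span {(X : ℂ[X]) ^ α i}).mkQ ∘ₗ
        LinearMap.proj (Fin.castAdd s i))) ∘ₗ L
  have hΦ : Function.Surjective Φ := by
    intro y
    choose g hg using fun i => Submodule.mkQ_surjective _ (y.2 i)
    obtain ⟨f, hf⟩ := hL (Fin.addCases g y.1)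
    refine ⟨f, Prod.ext ?_ ?_⟩
    · ext1 j; simp [Φ, hf]
    · ext1 i; simpa [Φ, hf] using hg i
  have hker : LinearMap.ker Φ = gradedSub (r + s) W := by
    ext f
    have h1 : f ∈ LinearMap.ker Φ ↔ (∀ j, L f (Fin.natAdd r j) = 0) ∧
        ∀ i, X ^ α i ∣ L f (Fin.castAdd s i) := by
      rw [LinearMap.mem_ker, Prod.ext_iff, funext_iff, funext_iff]
      refine and_congr Iff.rfl (forall_congr' fun i => ?_)
      rw [← Ideal.mem_span_singleton]
      exact Submodule.Quotient.mk_eq_zero _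
    rw [h1, mem_gradedSub]
    simp only [hb, b.mem_span_image, X_pow_dvd_iff, Polynomial.ext_iff, hcoeff, coeff_zero]
    constructor
    · rintro ⟨h0, h⟩ d j hj
      rw [Finset.mem_coe, Finsupp.mem_support_iff] at hj
      revert hj
      refine Fin.addCases (fun i => ?_) (fun i => ?_) j
      · intro hj
        refine ⟨i, ?_, rfl⟩
        by_contra hlt
        exact hj (h i d (not_le.1 hlt))
      · exact fun hj => absurd (h0 i d) hj
    · intro h
      refine ⟨fun j d => ?_, fun i d hd => ?_⟩
      · by_contra hne
        obtain ⟨i, -, hi⟩ := h d (Finsupp.mem_support_iff.2 hne)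
        have := congrArg Fin.val hi
        simp at this
        omega
      · by_contra hne
        obtain ⟨i', hi', hi⟩ := h d (Finsupp.mem_support_iff.2 hne)
        rw [Fin.castAdd_injective r s hi] at hi'
        exact absurd hi' (not_le.2 hd)
  rw [← hker]
  exact ⟨Φ.quotKerEquivOfSurjective hΦ⟩

/-- The coordinate flag realises the dimensions prescribed by `α`. -/
lemma exists_filtration (n r : ℕ) (hrn : r ≤ n) (α : Fin r → ℕ) :
    ∃ W : ℕ →o Submodule ℂ (Fin n → ℂ),
      ∀ d, Module.finrank ℂ (W d) = (Finset.univ.filter fun i => α i ≤ d).card := by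
  let v : Fin r → Fin n → ℂ := fun i => Pi.basisFun ℂ (Fin n) (Fin.castLE hrn i)
  have hv : LinearIndependent ℂ v :=
    (Pi.basisFun ℂ (Fin n)).linearIndependent.comp _ (Fin.castLE_injective hrn)
  refine ⟨⟨fun d => Submodule.span ℂ (v '' {i | α i ≤ d}), fun d e hde =>
    Submodule.span_mono (Set.image_mono fun i (hi : α i ≤ d) => hi.trans hde)⟩, fun d => ?_⟩
  have := finrank_span_eq_card (hv.comp (Subtype.val : {i // α i ≤ d} → Fin r)
    Subtype.val_injective)
  rw [← Fintype.card_subtype, ← this]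
  change Module.finrank ℂ (Submodule.span ℂ (v '' {i | α i ≤ d})) = _
  rw [Set.image_eq_range]
  rfl

/-! ### Flags as filtrations -/

/-- The filtration attached to a flag: `V_I` enters in degree `a I`. -/
noncomputable def flagFiltration (n k : ℕ) (a : Fin k → ℕ)
    (V : Fin k → Submodule ℂ (Fin n → ℂ)) : ℕ →o Submodule ℂ (Fin n → ℂ) where
  toFun d := ⨆ I, ⨆ (_ : a I ≤ d), V I
  monotone' _ _ hde := iSup_mono fun _ => iSup_le fun h => le_iSup_of_le (h.trans hde) le_rfl

lemma MV_eq_gradedSub (n k : ℕ) (a : Fin k → ℕ) (V : Fin k → Submodule ℂ (Fin n → ℂ)) :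
    MV n k a V = gradedSub n (flagFiltration n k a V) := by
  refine le_antisymm ?_ fun f hf => ?_
  · refine Submodule.span_le.2 (Set.iUnion_subset fun I => ?_)
    rintro _ ⟨v, hv, rfl⟩
    exact monoVec_mem_gradedSub.2 (Submodule.mem_iSup_of_mem I (Submodule.mem_iSup_of_mem le_rfl hv))
  · obtain ⟨N, hN⟩ := exists_eq_sum_monoVec n f
    have key : ∀ d, flagFiltration n k a V d ≤ pieces n (MV n k a V) d := by
      refine fun d => iSup_le fun I => iSup_le fun hI => ?_
      have h1 : V I ≤ pieces n (MV n k a V) (a I) := fun v hv =>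
        Submodule.subset_span (Set.mem_iUnion_of_mem I ⟨v, hv, rfl⟩)
      exact h1.trans ((pieces n (MV n k a V)).monotone hI)
    rw [hN]
    exact Submodule.sum_mem _ fun d _ => key d (hf d)

lemma flagFiltration_eq (n k : ℕ) (a : Fin k → ℕ) (V : Fin k → Submodule ℂ (Fin n → ℂ))
    (hV : Monotone V) (I : Fin k) (d : ℕ) (hI : a I ≤ d) (hmax : ∀ J, a J ≤ d → J ≤ I) :
    flagFiltration n k a V d = V I :=
  le_antisymm (iSup_le fun J => iSup_le fun hJ => hV (hmax J hJ))
    (le_iSup_of_le I (le_iSup_of_le hI le_rfl))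

lemma flagFiltration_apply (n k : ℕ) (a : Fin k → ℕ) (ha : StrictMono a)
    (V : Fin k → Submodule ℂ (Fin n → ℂ)) (hV : Monotone V) (I : Fin k) :
    flagFiltration n k a V (a I) = V I :=
  flagFiltration_eq n k a V hV I _ le_rfl fun _ hJ => ha.le_iff_le.1 hJ

lemma sum_mult (r k : ℕ) (α : Fin r → ℕ) (a : Fin k → ℕ) (ha : StrictMono a) (m : Fin k → ℕ)
    (hrange : Set.range α = Set.range a)
    (hm : ∀ I : Fin k, m I = (Finset.univ.filter fun i : Fin r => α i = a I).card) (I : Fin k) :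
    ∑ J ∈ Finset.univ.filter (fun J : Fin k => J ≤ I), m J
      = (Finset.univ.filter fun i => α i ≤ a I).card := by
  simp only [hm]
  rw [← Finset.card_biUnion]
  · congr 1
    ext i
    obtain ⟨J, hJ⟩ : α i ∈ Set.range a := hrange ▸ Set.mem_range_self i
    simp only [Finset.mem_biUnion, Finset.mem_filter, Finset.mem_univ, true_and]
    constructor
    · rintro ⟨J, hJI, h⟩
      exact h ▸ ha.monotone hJI
    · exact fun h => ⟨J, ha.le_iff_le.1 (hJ ▸ h), hJ.symm⟩
  · intro J _ J' _ hne
    refine Finset.disjoint_left.2 fun i hi hi' => hne (ha.injective ?_)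
    simp only [Finset.mem_filter] at hi hi'
    exact hi.2.symm.trans hi'.2

lemma finrank_flagFiltration (n r k : ℕ) (α : Fin r → ℕ) (a : Fin k → ℕ)
    (hrange : Set.range α = Set.range a)
    (V : Fin k → Submodule ℂ (Fin n → ℂ)) (hV : Monotone V)
    (hdim : ∀ I, Module.finrank ℂ (V I) = (Finset.univ.filter fun i => α i ≤ a I).card)
    (ha : StrictMono a) (d : ℕ) :
    Module.finrank ℂ (flagFiltration n k a V d)
      = (Finset.univ.filter fun i => α i ≤ d).card := by
  have hα : ∀ i, ∃ J, a J = α i := fun i => by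
    have : α i ∈ Set.range a := hrange ▸ Set.mem_range_self i
    exact this
  rcases (Finset.univ.filter fun I => a I ≤ d).eq_empty_or_nonempty with h | h
  · have h' : ∀ I, ¬ a I ≤ d := fun I hI => by
      have : I ∈ (Finset.univ.filter fun I => a I ≤ d) := by simpa using hI
      simp [h] at this
    have h1 : flagFiltration n k a V d = ⊥ :=
      le_bot_iff.1 (iSup_le fun I => iSup_le fun hI => absurd hI (h' I))
    rw [h1, finrank_bot, eq_comm, Finset.card_eq_zero, Finset.filter_eq_empty_iff]
    intro i _ hi
    obtain ⟨J, hJ⟩ := hα i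
    exact h' J (hJ ▸ hi)
  · obtain ⟨I, hI, hmax⟩ := Finset.exists_max_image _ id h
    simp only [Finset.mem_filter, Finset.mem_univ, true_and, id] at hI hmax
    rw [flagFiltration_eq n k a V hV I d hI hmax, hdim]
    congr 1
    ext i
    simp only [Finset.mem_filter, Finset.mem_univ, true_and]
    refine ⟨fun h => h.trans hI, fun h => ?_⟩
    obtain ⟨J, hJ⟩ := hα i
    rw [← hJ] at h ⊢
    exact ha.monotone (hmax J h)

/-! ### The bijection -/

/-- one-chart form of Theorem 2.1.9: with `0 ≤ α₁ ≤ ⋯ ≤ α_r`,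
distinct values `a₁ < ⋯ < a_k` of multiplicities `m₁, …, m_k`, the assignment
`V ↦ M_V` is a bijection from the set of flags `V₁ ⊊ ⋯ ⊊ V_k` in `ℂⁿ` with
`dim V_I = m₁ + ⋯ + m_I` onto the set of `ℂ^×`-invariant `ℂ[z]`-submodules
`M ⊆ ℂ[z]^{⊕n}` with `ℂ[z]^{⊕n}/M ≅ ℂ[z]^{⊕(n−r)} ⊕ (⊕_{i=1}^r ℂ[z]/(z^{α_i}))`. -/
theorem fixed_points_are_flags
    (n r k : ℕ) (hr : 1 ≤ r) (hrn : r ≤ n)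
    (α : Fin r → ℕ) (hα : Monotone α)
    (a : Fin k → ℕ) (ha : StrictMono a) (m : Fin k → ℕ)
    (hrange : Set.range α = Set.range a)
    (hm : ∀ I : Fin k, m I = (Finset.univ.filter fun i : Fin r => α i = a I).card) :
    Set.BijOn (fun V : Fin k → Submodule ℂ (Fin n → ℂ) => MV n k a V)
      {V | StrictMono V ∧
           ∀ I : Fin k, Module.finrank ℂ (V I)
             = ∑ J ∈ Finset.univ.filter (fun J : Fin k => J ≤ I), m J}
      {M | (∀ t : ℂ, t ≠ 0 → substVec n t '' (M : Set (Fin n → Polynomial ℂ)) = M) ∧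
           Nonempty
             (((Fin n → Polynomial ℂ) ⧸ M) ≃ₗ[Polynomial ℂ]
               ((Fin (n - r) → Polynomial ℂ) ×
                 ((i : Fin r) → Polynomial ℂ ⧸ Ideal.span {(Polynomial.X : Polynomial ℂ) ^ α i})))} := by
  have hsum := sum_mult r k α a ha m hrange hm
  refine ⟨?_, ?_, ?_⟩
  · rintro V ⟨hV, hdim⟩
    simp only [hsum] at hdim
    change MV n k a V ∈ _
    rw [MV_eq_gradedSub]
    exact ⟨substVec_image_gradedSub n _, quotient_gradedSub_equiv n r hrn α hα _
      (finrank_flagFiltration n r k α a hrange V hV.monotone hdim ha)⟩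
  · rintro V ⟨hV, -⟩ V' ⟨hV', -⟩ h
    change MV n k a V = MV n k a V' at h
    rw [MV_eq_gradedSub, MV_eq_gradedSub] at h
    ext1 I
    rw [← flagFiltration_apply n k a ha V hV.monotone, gradedSub_injective n h,
      flagFiltration_apply n k a ha V' hV'.monotone]
  · rintro M ⟨hM, ⟨e⟩⟩
    have hMW := eq_gradedSub_pieces n M hM
    set W := pieces n M with hWdef
    clear_value W
    subst hMW
    obtain ⟨W', hW'⟩ := exists_filtration n r hrn α
    obtain ⟨e'⟩ := quotient_gradedSub_equiv n r hrn α hα W' hW'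
    have hW : ∀ d, Module.finrank ℂ (W d) = (Finset.univ.filter fun i => α i ≤ d).card :=
      fun d => (finrank_eq_of_quotient_equiv n W W' (e.trans e'.symm) d).trans (hW' d)
    have hmono : Monotone fun I => W (a I) := W.monotone.comp ha.monotone
    refine ⟨fun I => W (a I), ⟨?_, fun I => (hW _).trans (hsum I).symm⟩, ?_⟩
    · refine hmono.strictMono_of_injective fun I J hIJ => ?_
      -- Equal subspaces give equal counts of exponents below `a I` and `a J`, although the larger
      -- of the two values is itself attained by `α`.
      have aux : ∀ I J, I < J → W (a I) ≠ W (a J) := by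
        intro I J hlt heq
        obtain ⟨i, hi⟩ : a J ∈ Set.range α := hrange ▸ Set.mem_range_self J
        have hcard := (hW (a I)).symm.trans ((congrArg (fun U : Submodule ℂ (Fin n → ℂ) =>
          Module.finrank ℂ U) heq).trans (hW (a J)))
        refine absurd hcard (Finset.card_lt_card (Finset.ssubset_iff_of_subset ?_ |>.2
          ⟨i, ?_, ?_⟩)).ne
        · intro x hx
          simp only [Finset.mem_filter, Finset.mem_univ, true_and] at hx ⊢
          exact hx.trans (ha hlt).le
        · simp [hi]
        · simpa [hi] using ha hlt
      rcases lt_trichotomy I J with h | h | h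
      · exact absurd hIJ (aux I J h)
      · exact h
      · exact absurd hIJ.symm (aux J I h)
    · change MV n k a _ = _
      rw [MV_eq_gradedSub]
      congr 1
      ext1
      funext d
      refine Submodule.eq_of_le_of_finrank_eq
        (iSup_le fun I => iSup_le fun hI => W.monotone hI) ?_
      exact (finrank_flagFiltration n r k α a hrange _ hmono (fun I => hW _) ha d).trans
        (hW d).symm
end

section
/- Let n ≥ r ≥ 1 be integers, and let 0 ≤ α₁ ≤ ⋯ ≤ α_r and 0 ≤ β₁ ≤ ⋯ ≤ β_r be nondecreasing sequences of nonnegative integers; let a₁ < ⋯ < a_k be the distinct values of (α_i) with multiplicities m₁, …, m_k, and b₁ < ⋯ < b_l the distinct values of (β_i) with multiplicities n₁, …, n_l. Define the multiplicity of 0 in the weight system Wt = Wt₁ ⊔ Wt₂ ⊔ Wt₃ as N₀ := #{ (i,j) ∈ {1,…,r}² : α_j − α_i < 0 ≤ α_j } + #{ (i,j) ∈ {1,…,r}² : −β_j ≤ 0 < β_i − β_j } + (n−r)·#{ i : −β_i ≤ 0 ≤ α_i }. Then N₀ = [ (n−r)r + Σ_{1 ≤ I < J ≤ k} m_I m_J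 ] + [ (n−r)r + Σ_{1 ≤ I < J ≤ l} n_I n_J ] − (n−r)r, i.e. N₀ equals dim Fl_{m₁, m₁+m₂, …, r}(ℂⁿ) + dim Fl_{n₁, n₁+n₂, …, r}(ℂⁿ) − dim Gr_r(ℂⁿ), the dimension of the fiber product of the two flag manifolds over Gr_r(ℂⁿ), which is the S¹-fixed-point component F_{α₁,…,α_r; β₁,…,β_r}. (Lemma 2.3.3 in combinatorial form.) -/
/-!
Since all `α i` and `β i` are nonnegative, the one-sided bounds at `μ = 0` hold automatically: the
first two terms count the pairs `(i, j)` with `α j < α i`, respectively `β j < β i`, and the third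
is `(n - r) * r`. The lemma `card_lt_pairs` sorts the pairs with `α j < α i` by their values
`(a I, a J)`, `I < J`; each such class is a product of two level sets of `α` and so has
`m I * m J` elements. The remaining `(n - r) * r` terms cancel.
-/

/-- The number of pairs at which `α` strictly decreases is the second elementary symmetric
function of the sizes of the level sets of `α`. -/
theorem card_lt_pairs {r k : ℕ} (α : Fin r → ℕ) (a : Fin k → ℕ) (ha : StrictMono a)
    (m : Fin k → ℕ) (hrange : Set.range α = Set.range a)
    (hm : ∀ I : Fin k, m I = (Finset.univ.filter fun i : Fin r => α i = a I).card) :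
    (Finset.univ.filter fun p : Fin r × Fin r => α p.2 < α p.1).card
      = ∑ p ∈ Finset.univ.filter (fun p : Fin k × Fin k => p.1 < p.2), m p.1 * m p.2 := by
  have hex : ∀ i, ∃ I, a I = α i := fun i => by
    have : α i ∈ Set.range a := hrange ▸ Set.mem_range_self i
    exact this
  choose f hf using hex
  -- The coordinates are swapped: the smaller value `α p.2` has the smaller index.
  rw [Finset.card_eq_sum_card_fiberwise (f := fun p : Fin r × Fin r => (f p.2, f p.1))
    (t := Finset.univ.filter (fun p : Fin k × Fin k => p.1 < p.2))]
  · refine Finset.sum_congr rfl fun q hq => ?_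
    have hq' : q.1 < q.2 := by simpa using hq
    rw [hm, hm, mul_comm, ← Finset.card_product]
    congr 1
    ext p
    simp only [Finset.mem_filter, Finset.mem_univ, true_and, Finset.mem_product, Prod.ext_iff,
      ← hf, ha.lt_iff_lt, ha.injective.eq_iff]
    constructor
    · rintro ⟨-, h1, h2⟩
      exact ⟨h2, h1⟩
    · rintro ⟨h2, h1⟩
      exact ⟨by rw [h1, h2]; exact hq', h1, h2⟩
  · intro p hp
    simpa [← hf, ha.lt_iff_lt] using hp

/-- Lemma 2.3.3 in combinatorial form: the multiplicity of the
weight `0` in the weight system `Wt = Wt₁ ⊔ Wt₂ ⊔ Wt₃` of the tangent space of the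
Quot scheme along `F_{α₁,…,α_r;β₁,…,β_r}` equals
`dim Fl_{m₁,…,r}(ℂⁿ) + dim Fl_{n₁,…,r}(ℂⁿ) − dim Gr_r(ℂⁿ)`, the dimension of the
fiber product of the two flag manifolds over the Grassmannian. -/
theorem multiplicity_of_zero_weight
    (n r k l : ℕ) (hr : 1 ≤ r) (hrn : r ≤ n)
    (α β : Fin r → ℕ) (hα : Monotone α) (hβ : Monotone β)
    (a : Fin k → ℕ) (ha : StrictMono a) (m : Fin k → ℕ)
    (hrangea : Set.range α = Set.range a)
    (hm : ∀ I : Fin k, m I = (Finset.univ.filter fun i : Fin r => α i = a I).card)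
    (b : Fin l → ℕ) (hb : StrictMono b) (nn : Fin l → ℕ)
    (hrangeb : Set.range β = Set.range b)
    (hn : ∀ J : Fin l, nn J = (Finset.univ.filter fun i : Fin r => β i = b J).card) :
    (Finset.univ.filter fun p : Fin r × Fin r =>
        (α p.2 : ℤ) - (α p.1 : ℤ) < 0 ∧ (0 : ℤ) ≤ (α p.2 : ℤ)).card
    + (Finset.univ.filter fun p : Fin r × Fin r =>
        -(β p.2 : ℤ) ≤ 0 ∧ (0 : ℤ) < (β p.1 : ℤ) - (β p.2 : ℤ)).card
    + (n - r) * (Finset.univ.filter fun i : Fin r =>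
        -(β i : ℤ) ≤ 0 ∧ (0 : ℤ) ≤ (α i : ℤ)).card
    = ((n - r) * r
        + ∑ p ∈ Finset.univ.filter (fun p : Fin k × Fin k => p.1 < p.2), m p.1 * m p.2)
      + ((n - r) * r
        + ∑ p ∈ Finset.univ.filter (fun p : Fin l × Fin l => p.1 < p.2), nn p.1 * nn p.2)
      - (n - r) * r := by
  rw [← card_lt_pairs α a ha m hrangea hm, ← card_lt_pairs β b hb nn hrangeb hn]
  have h1 : (Finset.univ.filter fun p : Fin r × Fin r =>
      (α p.2 : ℤ) - (α p.1 : ℤ) < 0 ∧ (0 : ℤ) ≤ (α p.2 : ℤ))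
      = Finset.univ.filter fun p : Fin r × Fin r => α p.2 < α p.1 :=
    Finset.filter_congr fun p _ => by omega
  have h2 : (Finset.univ.filter fun p : Fin r × Fin r =>
      -(β p.2 : ℤ) ≤ 0 ∧ (0 : ℤ) < (β p.1 : ℤ) - (β p.2 : ℤ))
      = Finset.univ.filter fun p : Fin r × Fin r => β p.2 < β p.1 :=
    Finset.filter_congr fun p _ => by omega
  have h3 : (Finset.univ.filter fun i : Fin r =>
      -(β i : ℤ) ≤ 0 ∧ (0 : ℤ) ≤ (α i : ℤ)).card = r := by
    rw [Finset.filter_true_of_mem fun i _ => by omega, Finset.card_univ, Fintype.card_fin]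
  rw [h1, h2, h3]
  omega
end
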